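/- Let M be an open surface with infinitely generated fundamental group and let {W_n} be a compact exhaustion of M such that each W_n is connected, each boundary curve of W_n separates M, and M − int(W_n) has no compact components. Then for each n there exists m > n such that W_m − int(W_n) has a connected component that is not an annulus. -/

import Mathlib

open Metric

/-- The standard closed annulus in ℝ² (model for `S¹ × [0,1]`). -/
noncomputable def annulusModel : Set (ℝ × ℝ) := closedBall (0 : ℝ × ℝ) 2 \ ball (0 : ℝ × ℝ) 1

/-!
Suppose that, for all `m > n`, every component of `W m \ U` is an annulus, where `U = int (W n)`.
Fix `N > n` and put `L = W N`. A path in `L' = W m`, `m ≥ N`, leaves `L` only inside annular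
components `A'` of `L' \ U`, and each excursion starts and ends in components of `L \ U` contained
in `A'`. There is in fact only one such component `A`, and its core circle generates `π₁(A')`, so
the excursion can be pushed back into `A ⊆ L`.

To see this, identify `A'` with a round annulus in the plane and let `J` be a union of core circles
of components of `L \ U` contained in `A'`. A complementary component of `J` inside `A'` would have
its boundary in `int L`, hence would lie in `L` because `M - int L` has no compact components, hence
in a single annulus, with its whole boundary on the core circle there; this is impossible. By
Eilenberg's theorem every nonvanishing function on `J` is then, up to a factor with a continuous
logarithm, a power of the coordinate of `A'`. Comparing winding numbers of suitable functions on `J`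
gives both claims.

Consequently every loop in `M` is homotopic into the compact set `L`. Loops in a compact subset of a
surface generate a finitely generated subgroup of the fundamental group: cut them along a finite
cover by small sets any two of which, if they meet, have homotopically trivial union.
-/

open Set Filter Topology unitInterval

theorem Icc_induction {a b : ℝ} (hab : a ≤ b) {P : Icc a b → Prop}
    (bot : P ⟨a, left_mem_Icc.2 hab⟩)
    (step : ∀ t, ∃ N ∈ 𝓝 t, ∀ y z, y ≤ z → Icc y z ⊆ N → P y → P z) :
    P ⟨b, right_mem_Icc.2 hab⟩ := by
  choose N hN hstep using step
  obtain ⟨t, ht_zero, ht_mono, ⟨m, ht_eventually⟩, ht_subset⟩ :=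
    exists_monotone_Icc_subset_open_cover_Icc hab (fun s ↦ isOpen_interior (s := N s))
      fun s _ ↦ mem_iUnion.2 ⟨s, mem_interior_iff_mem_nhds.2 (hN s)⟩
  have hP : ∀ k, P (t k) := by
    intro k
    induction k with
    | zero => rwa [show t 0 = ⟨a, left_mem_Icc.2 hab⟩ from Subtype.ext ht_zero]
    | succ k ih =>
      have hk : t k ≤ t (k + 1) := ht_mono k.le_succ
      obtain ⟨s, hs⟩ := ht_subset k
      exact hstep s _ _ hk (hs.trans interior_subset) ih
  simpa only [show t m = ⟨b, right_mem_Icc.2 hab⟩ from Subtype.ext (ht_eventually m le_rfl)]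
    using hP m

theorem real_induction {P : ℝ → Prop} (bot : ∀ᶠ x in atBot, P x)
    (step : ∀ t, ∃ N ∈ 𝓝 t, ∀ y z, y ≤ z → Icc y z ⊆ N → P y → P z) (b : ℝ) : P b := by
  obtain ⟨a, ha, hab⟩ := (bot.and (eventually_le_atBot b)).exists
  refine Icc_induction hab (P := fun t ↦ P t) ha fun t ↦ ?_
  obtain ⟨N, hN, h⟩ := step t
  exact ⟨_, continuous_subtype_val.continuousAt.preimage_mem_nhds hN,
    fun y z hyz hsub ↦ h y z hyz fun x hx ↦
      hsub (a := ⟨x, y.2.1.trans hx.1, hx.2.trans z.2.2⟩) hx⟩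

/-! ### Continuous logarithms -/

/-- `f` has a continuous logarithm on `S`; in particular `f` has no zero on `S`. -/
def HasLog {X : Type*} [TopologicalSpace X] (f : X → ℂ) (S : Set X) : Prop :=
  ∃ u : X → ℂ, ContinuousOn u S ∧ ∀ z ∈ S, f z = Complex.exp (u z)

section HasLog

variable {X Y : Type*} [TopologicalSpace X] [TopologicalSpace Y] {f g u v : X → ℂ} {S T : Set X}

theorem exists_continuousOn_int_of_exp_eq (hu : ContinuousOn u S) (hv : ContinuousOn v S)
    (h : ∀ z ∈ S, Complex.exp (u z) = Complex.exp (v z)) :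
    ∃ n : X → ℤ, ContinuousOn n S ∧ ∀ z ∈ S, u z = v z + n z * (2 * Real.pi * Complex.I) := by
  have hex : ∀ z ∈ S, ∃ n : ℤ, u z = v z + n * (2 * Real.pi * Complex.I) :=
    fun z hz ↦ Complex.exp_eq_exp_iff_exists_int.1 (h z hz)
  choose! n hn using hex
  refine ⟨n, ?_, hn⟩
  rw [Int.isClosedEmbedding_coe_real.isInducing.continuousOn_iff]
  have hcont : ContinuousOn (fun z ↦ ((u z - v z) / (2 * Real.pi * Complex.I)).re) S :=
    Complex.continuous_re.comp_continuousOn ((hu.sub hv).div_const _)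
  refine hcont.congr fun z hz ↦ ?_
  simp only [hn z hz, add_sub_cancel_left, mul_div_cancel_right₀ _ Complex.two_pi_I_ne_zero,
    Complex.intCast_re, Function.comp_apply]

theorem exists_int_of_exp_eq_of_isPreconnected (hS : IsPreconnected S) (hu : ContinuousOn u S)
    (hv : ContinuousOn v S) (h : ∀ z ∈ S, Complex.exp (u z) = Complex.exp (v z)) :
    ∃ n : ℤ, ∀ z ∈ S, u z = v z + n * (2 * Real.pi * Complex.I) := by
  obtain ⟨n, hn, huv⟩ := exists_continuousOn_int_of_exp_eq hu hv h
  obtain rfl | ⟨x, hx⟩ := S.eq_empty_or_nonempty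
  · exact ⟨0, fun _ hz ↦ hz.elim⟩
  · exact ⟨n x, fun z hz ↦ hS.constant hn hx hz ▸ huv z hz⟩

namespace HasLog

theorem mono (h : HasLog f S) (hT : T ⊆ S) : HasLog f T :=
  let ⟨u, hu, hf⟩ := h
  ⟨u, hu.mono hT, fun z hz ↦ hf z (hT hz)⟩

theorem congr (h : HasLog f S) (hg : ∀ z ∈ S, g z = f z) : HasLog g S :=
  let ⟨u, hu, hf⟩ := h
  ⟨u, hu, fun z hz ↦ (hg z hz).trans (hf z hz)⟩

theorem mul (hf : HasLog f S) (hg : HasLog g S) : HasLog (fun z ↦ f z * g z) S :=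
  let ⟨u, hu, hfu⟩ := hf
  let ⟨v, hv, hgv⟩ := hg
  ⟨u + v, hu.add hv, fun z hz ↦ by simp only [Pi.add_apply, Complex.exp_add, hfu z hz, hgv z hz]⟩

theorem zpow (h : HasLog f S) (k : ℤ) : HasLog (fun z ↦ f z ^ k) S :=
  let ⟨u, hu, hf⟩ := h
  ⟨fun z ↦ k * u z, continuousOn_const.mul hu, fun z hz ↦ by
    simp only [Complex.exp_int_mul, hf z hz]⟩

theorem of_mul (hfg : HasLog (fun z ↦ f z * g z) S) (hg : HasLog g S) : HasLog f S :=
  let ⟨u, hu, hfgu⟩ := hfg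
  let ⟨v, hv, hgv⟩ := hg
  ⟨u - v, hu.sub hv, fun z hz ↦ by
    simp only [Pi.sub_apply, Complex.exp_sub, ← hfgu z hz, hgv z hz,
      mul_div_cancel_right₀ _ (Complex.exp_ne_zero _)]⟩

theorem comp (h : HasLog f S) {φ : Y → X} {T : Set Y} (hφ : ContinuousOn φ T)
    (hT : MapsTo φ T S) : HasLog (fun y ↦ f (φ y)) T :=
  let ⟨u, hu, hf⟩ := h
  ⟨u ∘ φ, hu.comp hφ hT, fun _ hz ↦ hf _ (hT hz)⟩

theorem empty : HasLog f ∅ := ⟨0, continuousOn_empty _, fun _ hz ↦ hz.elim⟩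

theorem of_subsingleton (hS : S.Subsingleton) (h0 : ∀ z ∈ S, f z ≠ 0) : HasLog f S :=
  ⟨fun z ↦ Complex.log (f z), hS.continuousOn _, fun z hz ↦ (Complex.exp_log (h0 z hz)).symm⟩

theorem of_mem_slitPlane (hf : ContinuousOn f S) (h : MapsTo f S Complex.slitPlane) :
    HasLog f S :=
  ⟨fun z ↦ Complex.log (f z), hf.clog h, fun _ hz ↦
    (Complex.exp_log (Complex.slitPlane_ne_zero (h hz))).symm⟩

theorem of_norm_sub_one_lt (hf : ContinuousOn f S) (h : ∀ z ∈ S, ‖f z - 1‖ < 1) : HasLog f S :=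
  of_mem_slitPlane hf fun _ hz ↦ by
    simpa only [add_sub_cancel] using Complex.mem_slitPlane_of_norm_lt_one (h _ hz)

theorem glue (hS : IsClosed S) (hT : IsClosed T) (hu : ContinuousOn u S) (hv : ContinuousOn v T)
    (hfu : ∀ z ∈ S, f z = Complex.exp (u z)) (hfv : ∀ z ∈ T, f z = Complex.exp (v z))
    (huv : EqOn u v (S ∩ T)) : HasLog f (S ∪ T) := by
  classical
  have hwu : EqOn (S.piecewise u v) u S := piecewise_eqOn S u v
  have hwv : EqOn (S.piecewise u v) v T := fun z hz ↦ by
    by_cases hzS : z ∈ S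
    · exact (hwu hzS).trans (huv ⟨hzS, hz⟩)
    · exact piecewise_eq_of_notMem S u v hzS
  refine ⟨S.piecewise u v, (hu.congr hwu).union_of_isClosed (hv.congr hwv) hS hT, ?_⟩
  rintro z (hz | hz)
  · rw [hwu hz, hfu z hz]
  · rw [hwv hz, hfv z hz]

theorem union (hS : IsClosed S) (hT : IsClosed T) (hST : IsPreconnected (S ∩ T))
    (hfS : HasLog f S) (hfT : HasLog f T) : HasLog f (S ∪ T) := by
  obtain ⟨u, hu, hfu⟩ := hfS
  obtain ⟨v, hv, hfv⟩ := hfT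
  obtain ⟨n, hn⟩ := exists_int_of_exp_eq_of_isPreconnected hST (hu.mono inter_subset_left)
    (hv.mono inter_subset_right) fun z hz ↦ (hfu z hz.1).symm.trans (hfv z hz.2)
  refine glue (v := fun z ↦ v z + n * (2 * Real.pi * Complex.I)) hS hT hu
    (hv.add continuousOn_const) hfu (fun z hz ↦ ?_) hn
  rw [hfv z hz, Complex.exp_eq_exp_iff_exists_int.2 ⟨n, rfl⟩]

end HasLog

theorem exists_continuous_eqOn_of_continuousOn [NormalSpace X] (hu : ContinuousOn u S)
    (hS : IsClosed S) : ∃ v : X → ℂ, Continuous v ∧ EqOn v u S := by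
  obtain ⟨v, hv⟩ := ContinuousMap.exists_restrict_eq hS ⟨S.domRestrict u, hu.domRestrict⟩
  exact ⟨v, v.continuous, fun z hz ↦ congrArg (fun w ↦ w ⟨z, hz⟩) hv⟩

namespace HasLog

variable [T4Space X] {K : Set X} {φ : X → ℝ}

theorem exists_nhds_fiber (hK : IsCompact K) (hφ : Continuous φ) (hf : ContinuousOn f K) {t : ℝ}
    (h : HasLog f (K ∩ φ ⁻¹' {t})) : ∃ N ∈ 𝓝 t, HasLog f (K ∩ φ ⁻¹' N) := by
  obtain ⟨u, hu, hfu⟩ := h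
  obtain ⟨v, hv, hvu⟩ :=
    exists_continuous_eqOn_of_continuousOn hu (hK.isClosed.inter (isClosed_singleton.preimage hφ))
  set q : X → ℂ := fun z ↦ f z * Complex.exp (-v z) with hq_def
  have hq : ContinuousOn q K := hf.mul hv.neg.cexp.continuousOn
  have hqt : ∀ z ∈ K ∩ φ ⁻¹' {t}, q z = 1 := fun z hz ↦ by
    simp only [hq_def, hfu z hz, hvu hz, ← Complex.exp_add, add_neg_cancel, Complex.exp_zero]
  set B : Set X := K ∩ q ⁻¹' {w | 1 ≤ ‖w - 1‖}
  have hBc : IsCompact B := hK.of_isClosed_subset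
    (hq.preimage_isClosed_of_isClosed hK.isClosed
      (isClosed_le continuous_const (by fun_prop))) inter_subset_left
  have htB : t ∉ φ '' B := by
    rintro ⟨z, ⟨hzK, hz⟩, hzt⟩
    have hz' : 1 ≤ ‖q z - 1‖ := hz
    rw [hqt z ⟨hzK, hzt⟩, sub_self, norm_zero] at hz'
    exact absurd hz' (by norm_num)
  refine ⟨(φ '' B)ᶜ, (hBc.image hφ).isClosed.isOpen_compl.mem_nhds htB, ?_⟩
  have hq_log : HasLog q (K ∩ φ ⁻¹' (φ '' B)ᶜ) :=
    of_norm_sub_one_lt (hq.mono inter_subset_left) fun z hz ↦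
      not_le.1 fun hle ↦ hz.2 (mem_image_of_mem φ ⟨hz.1, hle⟩)
  refine (hq_log.mul ⟨v, hv.continuousOn, fun _ _ ↦ rfl⟩).congr fun z _ ↦ ?_
  simp only [hq_def, mul_assoc, ← Complex.exp_add, neg_add_cancel, Complex.exp_zero, mul_one]

theorem of_fibers (hK : IsCompact K) (hφ : Continuous φ) (hf : ContinuousOn f K)
    (hconn : ∀ t, IsPreconnected (K ∩ φ ⁻¹' {t})) (hlog : ∀ t, HasLog f (K ∩ φ ⁻¹' {t})) :
    HasLog f K := by
  obtain ⟨b, hb⟩ := (hK.image hφ).bddAbove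
  obtain ⟨a, ha⟩ := (hK.image hφ).bddBelow
  refine (real_induction (P := fun y ↦ HasLog f (K ∩ φ ⁻¹' Iic y)) ?_ (fun t ↦ ?_) b).mono
    fun z hz ↦ ⟨hz, hb (mem_image_of_mem φ hz)⟩
  · filter_upwards [eventually_lt_atBot a] with y hy
    convert HasLog.empty (f := f)
    exact eq_empty_of_forall_notMem fun z hz ↦
      hy.not_ge ((ha (mem_image_of_mem φ hz.1)).trans hz.2)
  · obtain ⟨N, hN, hNlog⟩ := exists_nhds_fiber hK hφ hf (hlog t)
    refine ⟨N, hN, fun y z hyz hsub hy ↦ ?_⟩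
    have hIic : IsClosed (K ∩ φ ⁻¹' Iic y) := hK.isClosed.inter (isClosed_Iic.preimage hφ)
    have hIcc : IsClosed (K ∩ φ ⁻¹' Icc y z) := hK.isClosed.inter (isClosed_Icc.preimage hφ)
    have hIic_Icc : Iic y ∩ Icc y z = {y} := by
      ext t
      exact ⟨fun ht ↦ le_antisymm ht.1 ht.2.1, fun ht ↦ ⟨ht.le, ht.ge, ht.le.trans hyz⟩⟩
    have hinter : IsPreconnected (K ∩ φ ⁻¹' Iic y ∩ (K ∩ φ ⁻¹' Icc y z)) := by
      rw [← inter_inter_distrib_left, ← preimage_inter, hIic_Icc]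
      exact hconn y
    rw [← Iic_union_Icc_eq_Iic hyz, preimage_union, inter_union_distrib_left]
    exact hy.union hIic hIcc hinter (hNlog.mono (inter_subset_inter_right K (preimage_mono hsub)))

theorem of_injOn (hK : IsCompact K) (hφ : Continuous φ) (hinj : InjOn φ K)
    (hf : ContinuousOn f K) (h0 : ∀ z ∈ K, f z ≠ 0) : HasLog f K := by
  have hfiber : ∀ t, (K ∩ φ ⁻¹' {t}).Subsingleton := fun t z hz w hw ↦
    hinj hz.1 hw.1 (hz.2.trans hw.2.symm)
  exact of_fibers hK hφ hf (fun t ↦ (hfiber t).isPreconnected)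
    fun t ↦ of_subsingleton (hfiber t) fun z hz ↦ h0 z hz.1

end HasLog

end HasLog

/-! ### Eilenberg's factorization theorem -/

/-- The rational function `∏ (z - c) ^ k` over the pairs `(c, k)` of the list `l`. -/
noncomputable def linearFactorProd (l : List (ℂ × ℤ)) (z : ℂ) : ℂ :=
  (l.map fun p ↦ (z - p.1) ^ p.2).prod

/-- The integer step function with a jump of height `k` just after each `s`, for the pairs `(s, k)`
of the list `l`. -/
noncomputable def jumpSum (l : List (ℝ × ℤ)) (t : ℝ) : ℤ :=
  (l.map fun p ↦ if p.1 < t then p.2 else 0).sum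

theorem linearFactorProd_append (l l' : List (ℂ × ℤ)) (z : ℂ) :
    linearFactorProd (l ++ l') z = linearFactorProd l z * linearFactorProd l' z := by
  rw [linearFactorProd, List.map_append, List.prod_append]
  rfl

theorem linearFactorProd_cons (p : ℂ × ℤ) (l : List (ℂ × ℤ)) (z : ℂ) :
    linearFactorProd (p :: l) z = (z - p.1) ^ p.2 * linearFactorProd l z := by
  rw [linearFactorProd, List.map_cons, List.prod_cons]
  rfl

theorem jumpSum_cons (p : ℝ × ℤ) (l : List (ℝ × ℤ)) (t : ℝ) :
    jumpSum (p :: l) t = (if p.1 < t then p.2 else 0) + jumpSum l t := by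
  rw [jumpSum, List.map_cons, List.sum_cons]
  rfl

theorem jumpSum_eq_sum {l : List (ℝ × ℤ)} {t : ℝ} (h : ∀ p ∈ l, p.1 < t) :
    jumpSum l t = (l.map Prod.snd).sum := by
  rw [jumpSum, List.map_congr_left fun p hp ↦ if_pos (h p hp)]

theorem exists_jumpSum_eq {T : Set ℝ} (hT : IsCompact T) {n : ℝ → ℤ} (hn : ContinuousOn n T) :
    ∃ l : List (ℝ × ℤ), (∀ p ∈ l, p.1 ∉ T) ∧ ∀ t ∈ T, n t = jumpSum l t := by
  obtain ⟨b, hb⟩ := hT.bddAbove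
  obtain ⟨a, ha⟩ := hT.bddBelow
  suffices H : ∃ l : List (ℝ × ℤ), (∀ p ∈ l, p.1 ∉ T ∧ p.1 ≤ b) ∧
      ∀ t ∈ T, t ≤ b → n t = jumpSum l t by
    obtain ⟨l, hl, hn⟩ := H
    exact ⟨l, fun p hp ↦ (hl p hp).1, fun t ht ↦ hn t ht (hb ht)⟩
  refine real_induction (P := fun y ↦ ∃ l : List (ℝ × ℤ), (∀ p ∈ l, p.1 ∉ T ∧ p.1 ≤ y) ∧
    ∀ t ∈ T, t ≤ y → n t = jumpSum l t) ?_ (fun s ↦ ?_) b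
  · filter_upwards [eventually_lt_atBot a] with y hy
    exact ⟨[], by simp, fun t ht hty ↦ absurd ((ha ht).trans hty) hy.not_ge⟩
  have hconst : ∃ N ∈ 𝓝 s, ∃ m, ∀ t ∈ T ∩ N, n t = m := by
    by_cases hs : s ∈ T
    · have hev : ∀ᶠ t in 𝓝[T] s, n t = n s :=
        (hn s hs).eventually_mem (mem_nhds_discrete.2 (mem_singleton (n s)))
      exact ⟨_, eventually_nhdsWithin_iff.1 hev, n s, fun t ht ↦ ht.2 ht.1⟩
    · exact ⟨Tᶜ, hT.isClosed.isOpen_compl.mem_nhds hs, 0, fun t ht ↦ absurd ht.1 ht.2⟩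
  obtain ⟨N, hN, m, hm⟩ := hconst
  refine ⟨N, hN, fun y z hyz hsub ⟨l, hl, hnl⟩ ↦ ?_⟩
  have htotal : ∀ t ∈ T, y ≤ t → jumpSum l t = (l.map Prod.snd).sum := fun t ht hyt ↦
    jumpSum_eq_sum fun p hp ↦ ((hl p hp).2.trans hyt).lt_of_ne fun h ↦ (hl p hp).1 (h ▸ ht)
  by_cases hy : y ∈ T
  · refine ⟨l, fun p hp ↦ ⟨(hl p hp).1, (hl p hp).2.trans hyz⟩, fun t ht htz ↦ ?_⟩
    obtain hty | hyt := le_total t y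
    · exact hnl t ht hty
    · rw [hm t ⟨ht, hsub ⟨hyt, htz⟩⟩, ← hm y ⟨hy, hsub (left_mem_Icc.2 hyz)⟩, hnl y hy le_rfl,
        htotal y hy le_rfl, htotal t ht hyt]
  · refine ⟨(y, m - (l.map Prod.snd).sum) :: l, List.forall_mem_cons.2 ⟨⟨hy, hyz⟩, fun p hp ↦
      ⟨(hl p hp).1, (hl p hp).2.trans hyz⟩⟩, fun t ht htz ↦ ?_⟩
    rw [jumpSum_cons]
    obtain hty | hyt := (show t ≠ y from fun h ↦ hy (h ▸ ht)).lt_or_gt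
    · rw [if_neg hty.not_gt, zero_add, hnl t ht hty.le]
    · rw [if_pos hyt, htotal t ht hyt.le, hm t ⟨ht, hsub ⟨hyt.le, htz⟩⟩, sub_add_cancel]

theorem mem_slitPlane_of_re_nonneg {w : ℂ} (h : 0 ≤ w.re) (h0 : w ≠ 0) : w ∈ Complex.slitPlane :=
  Complex.mem_slitPlane_iff.2 <| h.lt_or_eq.imp id fun hre him ↦ h0 (Complex.ext hre.symm him)

theorem log_sub_log_neg {w : ℂ} (hre : w.re = 0) (h0 : w ≠ 0) :
    Complex.log w - (Complex.log (-w) - Real.pi * Complex.I) =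
      (if 0 < w.im then 1 else 0) * (2 * Real.pi * Complex.I) := by
  have him : w.im ≠ 0 := fun him ↦ h0 (Complex.ext hre him)
  rw [Complex.log, Complex.log, norm_neg]
  obtain hneg | hpos := him.lt_or_gt
  · rw [if_neg hneg.not_gt, Complex.arg_neg_eq_arg_add_pi_of_im_neg hneg]
    push_cast
    ring
  · rw [if_pos hpos, Complex.arg_neg_eq_arg_sub_pi_of_im_pos hpos]
    push_cast
    ring

theorem exists_logs_linearFactorProd_vertical (x : ℝ) (K : Set ℂ) (l : List (ℝ × ℤ))
    (hl : ∀ p ∈ l, (⟨x, p.1⟩ : ℂ) ∉ K) :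
    ∃ u v : ℂ → ℂ, ContinuousOn u (K ∩ Complex.re ⁻¹' Iic x) ∧
      ContinuousOn v (K ∩ Complex.re ⁻¹' Ici x) ∧
      (∀ z ∈ K, linearFactorProd (l.map fun p ↦ (⟨x, p.1⟩, p.2)) z = Complex.exp (u z)) ∧
      (∀ z ∈ K, linearFactorProd (l.map fun p ↦ (⟨x, p.1⟩, p.2)) z = Complex.exp (v z)) ∧
      ∀ z ∈ K, z.re = x → v z = u z + jumpSum l z.im * (2 * Real.pi * Complex.I) := by
  induction l with
  | nil =>
    refine ⟨0, 0, continuousOn_const, continuousOn_const, ?_, ?_, ?_⟩ <;>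
      simp [linearFactorProd, jumpSum]
  | cons p l ih =>
    obtain ⟨hp, hl⟩ := List.forall_mem_cons.1 hl
    obtain ⟨u, v, hu, hv, hlu, hlv, huv⟩ := ih hl
    set c : ℂ := ⟨x, p.1⟩
    have hne : ∀ z ∈ K, z - c ≠ 0 := fun z hz h ↦ hp (sub_eq_zero.1 h ▸ hz)
    refine ⟨fun z ↦ p.2 * (Complex.log (-(z - c)) - Real.pi * Complex.I) + u z,
      fun z ↦ p.2 * Complex.log (z - c) + v z, ?_, ?_, fun z hz ↦ ?_, fun z hz ↦ ?_,
      fun z hz hzx ↦ ?_⟩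
    · refine (continuousOn_const.mul (ContinuousOn.sub (ContinuousOn.clog (by fun_prop) ?_)
        continuousOn_const)).add hu
      exact fun z hz ↦ mem_slitPlane_of_re_nonneg (by simpa [c] using hz.2)
        (neg_ne_zero.2 (hne z hz.1))
    · refine (continuousOn_const.mul (ContinuousOn.clog (by fun_prop) ?_)).add hv
      exact fun z hz ↦ mem_slitPlane_of_re_nonneg (by simpa [c] using hz.2) (hne z hz.1)
    · rw [List.map_cons, linearFactorProd_cons, Complex.exp_add, Complex.exp_int_mul, hlu z hz,
        Complex.exp_sub, Complex.exp_log (neg_ne_zero.2 (hne z hz)), Complex.exp_pi_mul_I,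
        neg_div_neg_eq, div_one]
    · rw [List.map_cons, linearFactorProd_cons, Complex.exp_add, Complex.exp_int_mul, hlv z hz,
        Complex.exp_log (hne z hz)]
    · have hjump := log_sub_log_neg (w := z - c) (by simp [c, hzx]) (hne z hz)
      simp only [Complex.sub_im, sub_pos] at hjump
      simp only [jumpSum_cons, huv z hz hzx, Int.cast_add, Int.cast_ite, Int.cast_zero]
      split_ifs at hjump ⊢ <;> linear_combination (p.2 : ℂ) * hjump

theorem exists_hasLog_mul_linearFactorProd_of_half_planes {K : Set ℂ} (hK : IsCompact K)
    {f : ℂ → ℂ} {a : ℝ} (hleft : HasLog f (K ∩ Complex.re ⁻¹' Iic a))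
    (hright : HasLog f (K ∩ Complex.re ⁻¹' Ici a)) :
    ∃ l : List (ℂ × ℤ), (∀ p ∈ l, p.1 ∉ K ∧ p.1.re = a) ∧
      HasLog (fun z ↦ f z * linearFactorProd l z) K := by
  obtain ⟨g, hg, hfg⟩ := hleft
  obtain ⟨h, hh, hfh⟩ := hright
  have hleft : K ∩ Complex.re ⁻¹' {a} ⊆ K ∩ Complex.re ⁻¹' Iic a :=
    inter_subset_inter_right K (preimage_mono (singleton_subset_iff.2 self_mem_Iic))
  have hright : K ∩ Complex.re ⁻¹' {a} ⊆ K ∩ Complex.re ⁻¹' Ici a :=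
    inter_subset_inter_right K (preimage_mono (singleton_subset_iff.2 self_mem_Ici))
  obtain ⟨n, hn, hgh⟩ := exists_continuousOn_int_of_exp_eq (hg.mono hleft) (hh.mono hright)
    fun z hz ↦ (hfg z (hleft hz)).symm.trans (hfh z (hright hz))
  have hline : ContinuousOn (fun t : ℝ ↦ (⟨a, t⟩ : ℂ)) (Complex.im '' (K ∩ Complex.re ⁻¹' {a})) :=
    (Complex.equivRealProdCLM.symm.continuous.comp (Continuous.prodMk_right a)).continuousOn
  have hmk : ∀ z : ℂ, z.re = a → ⟨a, z.im⟩ = z := fun z hz ↦ Complex.ext hz.symm rfl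
  obtain ⟨l, hl, hnl⟩ := exists_jumpSum_eq
    ((hK.inter_right (isClosed_singleton.preimage Complex.continuous_re)).image
      Complex.continuous_im)
    (hn.comp hline (forall_mem_image.2 fun z hz ↦ (hmk z hz.2).symm ▸ hz))
  obtain ⟨u, v, hu, hv, hlu, hlv, huv⟩ := exists_logs_linearFactorProd_vertical a K l
    fun p hp h ↦ hl p hp ⟨_, ⟨h, rfl⟩, rfl⟩
  refine ⟨l.map fun p ↦ (⟨a, p.1⟩, p.2), ?_, ?_⟩
  · exact List.forall_mem_map.2 fun p hp ↦ ⟨fun h ↦ hl p hp ⟨_, ⟨h, rfl⟩, rfl⟩, rfl⟩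
  · have hIic : IsClosed (K ∩ Complex.re ⁻¹' Iic a) :=
      hK.isClosed.inter (isClosed_Iic.preimage Complex.continuous_re)
    have hIci : IsClosed (K ∩ Complex.re ⁻¹' Ici a) :=
      hK.isClosed.inter (isClosed_Ici.preimage Complex.continuous_re)
    refine (HasLog.glue hIic hIci (hg.add hu) (hh.add hv) (fun z hz ↦ ?_) (fun z hz ↦ ?_)
      fun z hz ↦ ?_).mono fun z hz ↦ (le_total z.re a).imp (⟨hz, ·⟩) (⟨hz, ·⟩)
    · rw [Pi.add_apply, Complex.exp_add, hfg z hz, hlu z hz.1]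
    · rw [Pi.add_apply, Complex.exp_add, hfh z hz, hlv z hz.1]
    · have hza : z.re = a := le_antisymm hz.1.2 hz.2.2
      have hnz : n z = jumpSum l z.im := by
        rw [← hnl z.im ⟨z, ⟨hz.1.1, hza⟩, rfl⟩, Function.comp_apply, hmk z hza]
      rw [Pi.add_apply, Pi.add_apply, hgh z ⟨hz.1.1, hza⟩, huv z hz.1.1 hza, hnz]
      ring

theorem hasLog_linearFactorProd {X : Type*} [TopologicalSpace X] {S : Set X} {φ : X → ℂ}
    {l : List (ℂ × ℤ)} (h : ∀ p ∈ l, HasLog (fun z ↦ φ z - p.1) S) :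
    HasLog (fun z ↦ linearFactorProd l (φ z)) S := by
  induction l with
  | nil => exact ⟨0, continuousOn_const, fun z _ ↦ by simp [linearFactorProd]⟩
  | cons p l ih =>
    obtain ⟨hp, hl⟩ := List.forall_mem_cons.1 h
    exact ((hp.zpow p.2).mul (ih hl)).congr fun z _ ↦ linearFactorProd_cons p l (φ z)

theorem hasLog_vertical_line {K : Set ℂ} (hK : IsCompact K) {f : ℂ → ℂ} (hf : ContinuousOn f K)
    (h0 : ∀ z ∈ K, f z ≠ 0) (x : ℝ) : HasLog f (K ∩ Complex.re ⁻¹' {x}) :=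
  HasLog.of_injOn (hK.inter_right (isClosed_singleton.preimage Complex.continuous_re))
    Complex.continuous_im (fun _ hz _ hw him ↦ Complex.ext (hz.2.trans hw.2.symm) him)
    (hf.mono inter_subset_left) fun z hz ↦ h0 z hz.1

theorem exists_hasLog_mul_linearFactorProd {K : Set ℂ} (hK : IsCompact K) {f : ℂ → ℂ}
    (hf : ContinuousOn f K) (h0 : ∀ z ∈ K, f z ≠ 0) :
    ∃ l : List (ℂ × ℤ), (∀ p ∈ l, p.1 ∉ K) ∧ HasLog (fun z ↦ f z * linearFactorProd l z) K := by
  obtain ⟨b, hb⟩ := (hK.image Complex.continuous_re).bddAbove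
  obtain ⟨a, ha⟩ := (hK.image Complex.continuous_re).bddBelow
  suffices H : ∃ l : List (ℂ × ℤ), (∀ p ∈ l, p.1 ∉ K ∧ p.1.re ≤ b) ∧
      HasLog (fun z ↦ f z * linearFactorProd l z) (K ∩ Complex.re ⁻¹' Iic b) by
    obtain ⟨l, hl, hlog⟩ := H
    exact ⟨l, fun p hp ↦ (hl p hp).1, hlog.mono fun z hz ↦ ⟨hz, hb (mem_image_of_mem _ hz)⟩⟩
  refine real_induction (P := fun x ↦ ∃ l : List (ℂ × ℤ), (∀ p ∈ l, p.1 ∉ K ∧ p.1.re ≤ x) ∧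
    HasLog (fun z ↦ f z * linearFactorProd l z) (K ∩ Complex.re ⁻¹' Iic x)) ?_ (fun t ↦ ?_) b
  · filter_upwards [eventually_lt_atBot a] with x hx
    refine ⟨[], by simp, HasLog.empty.mono fun z hz ↦ ?_⟩
    exact hx.not_ge ((ha (mem_image_of_mem _ hz.1)).trans hz.2)
  obtain ⟨N, hN, hNlog⟩ :=
    (hasLog_vertical_line hK hf h0 t).exists_nhds_fiber hK Complex.continuous_re hf
  refine ⟨N, hN, fun x y hxy hsub ⟨l, hl, hleft⟩ ↦ ?_⟩
  have hl_log : HasLog (linearFactorProd l) (K ∩ Complex.re ⁻¹' Ici x) :=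
    hasLog_linearFactorProd fun p hp ↦ HasLog.of_mem_slitPlane (by fun_prop) fun z hz ↦
      mem_slitPlane_of_re_nonneg (sub_nonneg.2 ((hl p hp).2.trans hz.2))
        (sub_ne_zero.2 fun h ↦ (hl p hp).1 (h ▸ hz.1))
  have hKy : IsCompact (K ∩ Complex.re ⁻¹' Iic y) :=
    hK.inter_right (isClosed_Iic.preimage Complex.continuous_re)
  obtain ⟨l', hl', hlog⟩ := exists_hasLog_mul_linearFactorProd_of_half_planes (a := x) hKy
    (hleft.mono fun z hz ↦ ⟨hz.1.1, hz.2⟩)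
    ((hNlog.mono fun z hz ↦ ⟨hz.1.1, hsub ⟨hz.2, hz.1.2⟩⟩).mul
      (hl_log.mono fun z hz ↦ ⟨hz.1.1, hz.2⟩))
  refine ⟨l ++ l', List.forall_mem_append.2 ⟨fun p hp ↦ ⟨(hl p hp).1, (hl p hp).2.trans hxy⟩,
    fun p hp ↦ ?_⟩, hlog.congr fun z _ ↦ by simp only [linearFactorProd_append, mul_assoc]⟩
  have hpy : p.1.re ≤ y := (hl' p hp).2.trans_le hxy
  exact ⟨fun hpK ↦ (hl' p hp).1 ⟨hpK, hpy⟩, hpy⟩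

theorem exists_hasLog_mul_linearFactorProd_comp {X : Type*} [TopologicalSpace X] {K : Set X}
    (hK : IsCompact K) {f g : X → ℂ} (hf : ContinuousOn f K) (h0 : ∀ z ∈ K, f z ≠ 0)
    (hg : ContinuousOn g K) (hinj : InjOn g K) :
    ∃ l : List (ℂ × ℤ), (∀ p ∈ l, p.1 ∉ g '' K) ∧
      HasLog (fun z ↦ f z * linearFactorProd l (g z)) K := by
  have := isCompact_iff_compactSpace.1 hK
  have hemb : IsClosedEmbedding (K.domRestrict g) :=
    hg.domRestrict.isClosedEmbedding hinj.injective
  obtain ⟨F, hF⟩ := ContinuousMap.exists_extension hemb ⟨K.domRestrict f, hf.domRestrict⟩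
  have hFg : ∀ z ∈ K, F (g z) = f z := fun z hz ↦ congrArg (fun w ↦ w ⟨z, hz⟩) hF
  obtain ⟨l, hl, hlog⟩ := exists_hasLog_mul_linearFactorProd (hK.image_of_continuousOn hg)
    F.continuous.continuousOn (forall_mem_image.2 fun z hz ↦ hFg z hz ▸ h0 z hz)
  exact ⟨l, hl, (hlog.comp hg (mapsTo_image g K)).congr fun z hz ↦ by simp only [hFg z hz]⟩

/-! ### Invariance of domain -/

theorem hasLog_sub_div_sub_of_dist_lt {K : Set ℂ} {c c' : ℂ} (h : ∀ z ∈ K, dist c c' < dist z c) :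
    HasLog (fun z ↦ (z - c') / (z - c)) K := by
  have hne : ∀ z ∈ K, z - c ≠ 0 := fun z hz ↦
    sub_ne_zero.2 (dist_pos.1 (dist_nonneg.trans_lt (h z hz)))
  refine HasLog.of_norm_sub_one_lt (ContinuousOn.div (by fun_prop) (by fun_prop) hne) fun z hz ↦ ?_
  rw [div_sub_one (hne z hz), sub_sub_sub_cancel_left, norm_div,
    div_lt_one (norm_pos_iff.2 (hne z hz)), ← dist_eq_norm, ← dist_eq_norm]
  exact h z hz

theorem hasLog_sub_div_sub_of_isPreconnected {K S : Set ℂ} (hK : IsClosed K)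
    (hS : IsPreconnected S) (hSK : S ⊆ Kᶜ) {c c' : ℂ} (hc : c ∈ S) (hc' : c' ∈ S) :
    HasLog (fun z ↦ (z - c') / (z - c)) K := by
  have hne : ∀ x ∈ S, ∀ z ∈ K, z - x ≠ 0 := fun x hx z hz h ↦ hSK hx (sub_eq_zero.1 h ▸ hz)
  refine hS.induction₂ (fun c c' ↦ HasLog (fun z ↦ (z - c') / (z - c)) K) (fun x hx ↦ ?_)
    (fun x y w _ hy _ hxy hyw ↦ ?_) (fun x y _ _ hxy ↦ ?_) hc hc'
  · obtain ⟨ε, hε, hball⟩ := Metric.isOpen_iff.1 hK.isOpen_compl x (hSK hx)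
    filter_upwards [mem_nhdsWithin_of_mem_nhds (ball_mem_nhds x hε)] with y hy
    exact hasLog_sub_div_sub_of_dist_lt fun z hz ↦
      (mem_ball'.1 hy).trans_le (not_lt.1 fun h ↦ hball h hz)
  · exact (hyw.mul hxy).congr fun z hz ↦ (div_mul_div_cancel₀ (hne y hy z hz)).symm
  · exact (hxy.zpow (-1)).congr fun z _ ↦ by simp only [zpow_neg_one, inv_div]

theorem hasLog_of_convex {K : Set ℂ} (hK : IsCompact K) (hconv : Convex ℝ K) {f : ℂ → ℂ}
    (hf : ContinuousOn f K) (h0 : ∀ z ∈ K, f z ≠ 0) : HasLog f K :=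
  HasLog.of_fibers hK Complex.continuous_re hf
    (fun t ↦ (hconv.inter ((convex_singleton t).linear_preimage Complex.reLm)).isPreconnected)
    (hasLog_vertical_line hK hf h0)

theorem not_hasLog_sphere (y : ℂ) {r : ℝ} (hr : 0 < r) :
    ¬ HasLog (fun z ↦ z - y) (sphere y r) := by
  rintro ⟨u, hu, hexp⟩
  have hmem : ∀ t, circleMap y r t ∈ sphere y r := circleMap_mem_sphere y hr.le
  obtain ⟨n, hn⟩ := exists_int_of_exp_eq_of_isPreconnected isPreconnected_univ
    (hu.comp_continuous (continuous_circleMap y r) hmem).continuousOn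
    (v := fun t : ℝ ↦ Real.log r + t * Complex.I) (by fun_prop) fun t _ ↦ by
      rw [Function.comp_apply, ← hexp _ (hmem t)]
      simp only [circleMap_sub_center, circleMap_zero, Complex.exp_add, ← Complex.ofReal_exp,
        Real.exp_log hr]
  have hperiod : circleMap y r (2 * Real.pi) = circleMap y r 0 := by
    simpa using periodic_circleMap y r 0
  have h0 := hn 0 (mem_univ 0)
  have h2π := hn (2 * Real.pi) (mem_univ _)
  rw [Function.comp_apply] at h0
  rw [Function.comp_apply, hperiod] at h2π
  push_cast at h0 h2π
  exact Complex.two_pi_I_ne_zero (by linear_combination h0 - h2π)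

section Planar

variable {y : ℂ} {r : ℝ} {g : ℂ → ℂ}

theorem notMem_image_sphere_of_mem_ball (hinj : InjOn g (closedBall y r)) {x : ℂ}
    (hx : x ∈ ball y r) : g x ∉ g '' sphere y r := by
  rw [hinj.mem_image_iff sphere_subset_closedBall (ball_subset_closedBall hx)]
  exact fun h ↦ (mem_ball.1 hx).ne h

theorem hasLog_sub_sphere_of_notMem_interior (hr : 0 < r) (hg : ContinuousOn g (closedBall y r))
    (hinj : InjOn g (closedBall y r)) (hy : g y ∉ interior (g '' closedBall y r)) {c : ℂ}
    (hc : c ∉ g '' sphere y r) : HasLog (fun z ↦ g z - c) (sphere y r) := by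
  have hg' : ContinuousOn g (sphere y r) := hg.mono sphere_subset_closedBall
  have houtside : ∀ c, c ∉ g '' closedBall y r → HasLog (fun z ↦ g z - c) (sphere y r) :=
    fun c hc ↦ (hasLog_of_convex (isCompact_closedBall y r) (convex_closedBall y r)
      (hg.sub continuousOn_const) fun z hz h ↦ hc ⟨z, hz, sub_eq_zero.1 h⟩).mono
        sphere_subset_closedBall
  by_cases hcD : c ∉ g '' closedBall y r
  · exact houtside c hcD
  obtain ⟨x, hx, rfl⟩ := not_not.1 hcD
  have hxb : x ∈ ball y r := (mem_closedBall.1 hx).lt_of_ne fun h ↦ hc ⟨x, h, rfl⟩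
  have hJ : IsClosed (g '' sphere y r) :=
    ((isCompact_sphere y r).image_of_continuousOn hg').isClosed
  obtain ⟨ε, hε, hball⟩ := Metric.isOpen_iff.1 hJ.isOpen_compl _
    (notMem_image_sphere_of_mem_ball hinj (mem_ball_self hr))
  obtain ⟨c', hc', hc'D⟩ : ∃ c' ∈ ball (g y) ε, c' ∉ g '' closedBall y r :=
    not_subset.1 fun h ↦ hy (mem_interior.2 ⟨_, h, isOpen_ball, mem_ball_self hε⟩)
  have hconn : IsPreconnected (g '' ball y r ∪ ball (g y) ε) :=
    IsPreconnected.union (g y) (mem_image_of_mem g (mem_ball_self hr)) (mem_ball_self hε)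
      ((convex_ball y r).isPreconnected.image g (hg.mono ball_subset_closedBall))
      (convex_ball _ _).isPreconnected
  have hratio := hasLog_sub_div_sub_of_isPreconnected hJ hconn
    (union_subset (image_subset_iff.2 fun z hz ↦ notMem_image_sphere_of_mem_ball hinj hz) hball)
    (Or.inr hc') (Or.inl (mem_image_of_mem g hxb))
  exact ((hratio.comp hg' (mapsTo_image g _)).mul (houtside c' hc'D)).congr fun z hz ↦
    (div_mul_cancel₀ _ (sub_ne_zero.2 fun h ↦ hc'D ⟨z, sphere_subset_closedBall hz, h⟩)).symm

theorem mem_interior_image_closedBall (hr : 0 < r) (hg : ContinuousOn g (closedBall y r))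
    (hinj : InjOn g (closedBall y r)) : g y ∈ interior (g '' closedBall y r) := by
  by_contra hy
  obtain ⟨l, hl, hlog⟩ := exists_hasLog_mul_linearFactorProd_comp (isCompact_sphere y r)
    (f := fun z ↦ z - y) (by fun_prop) (fun z hz ↦ sub_ne_zero.2 (ne_of_mem_sphere hz hr.ne'))
    (hg.mono sphere_subset_closedBall) (hinj.mono sphere_subset_closedBall)
  exact not_hasLog_sphere y hr (hlog.of_mul (hasLog_linearFactorProd fun p hp ↦
    hasLog_sub_sphere_of_notMem_interior hr hg hinj hy (hl p hp)))

theorem isOpen_image_of_injOn {V : Set ℂ} (hV : IsOpen V) (hg : ContinuousOn g V)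
    (hinj : InjOn g V) : IsOpen (g '' V) := by
  rw [isOpen_iff_mem_nhds, forall_mem_image]
  intro y hy
  obtain ⟨r, hr, hball⟩ := Metric.nhds_basis_closedBall.mem_iff.1 (hV.mem_nhds hy)
  exact mem_of_superset (mem_interior_iff_mem_nhds.1
    (mem_interior_image_closedBall hr (hg.mono hball) (hinj.mono hball))) (image_mono hball)

end Planar

/-- `M` is a (possibly non-Hausdorff) topological surface: every point lies in an open set
homeomorphic to the plane, given here as the range of an open embedding of `ℂ`. -/
def IsSurface (M : Type*) [TopologicalSpace M] : Prop :=
  ∀ x : M, ∃ j : ℂ → M, IsOpenEmbedding j ∧ x ∈ range j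

theorem isSurface_of_forall_homeomorph {M : Type*} [TopologicalSpace M]
    (h : ∀ x : M, ∃ U : Set M, IsOpen U ∧ x ∈ U ∧ Nonempty (U ≃ₜ (ℝ × ℝ))) : IsSurface M := by
  intro x
  obtain ⟨U, hU, hxU, ⟨e⟩⟩ := h x
  refine ⟨Subtype.val ∘ (Complex.equivRealProdCLM.toHomeomorph.trans e.symm),
    hU.isOpenEmbedding_subtypeVal.comp (Homeomorph.isOpenEmbedding _), ?_⟩
  rw [EquivLike.range_comp, Subtype.range_coe]
  exact hxU

theorem IsSurface.isOpen_image_of_injOn {M : Type*} [TopologicalSpace M] (hM : IsSurface M)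
    {V : Set ℂ} (hV : IsOpen V) {g : ℂ → M} (hg : ContinuousOn g V) (hinj : InjOn g V) :
    IsOpen (g '' V) := by
  rw [isOpen_iff_mem_nhds, forall_mem_image]
  intro y hy
  obtain ⟨j, hj, hyj⟩ := hM (g y)
  set φ := (hj.toOpenPartialHomeomorph j).symm with hφ
  have hsource : φ.source = range j := by simp [hφ]
  have hV' : IsOpen (V ∩ g ⁻¹' range j) := hg.isOpen_inter_preimage hV hj.isOpen_range
  have hopen : IsOpen (φ ∘ g '' (V ∩ g ⁻¹' range j)) := by
    refine _root_.isOpen_image_of_injOn hV' (φ.continuousOn.comp (hg.mono inter_subset_left) ?_) ?_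
    · exact fun z hz ↦ hsource ▸ hz.2
    · exact φ.injOn.comp (hinj.mono inter_subset_left) fun z hz ↦ hsource ▸ hz.2
  have himage : j '' (φ ∘ g '' (V ∩ g ⁻¹' range j)) = g '' (V ∩ g ⁻¹' range j) := by
    rw [← image_comp]
    exact image_congr fun z hz ↦ φ.left_inv (hsource ▸ hz.2)
  exact mem_of_superset ((himage ▸ hj.isOpenMap _ hopen).mem_nhds ⟨y, ⟨hy, hyj⟩, rfl⟩)
    (image_mono inter_subset_left)

/-! ### Annulus charts -/

/-- The closed round annulus `1 ≤ ‖z‖ ≤ 2` in the plane. -/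
def roundAnnulus : Set ℂ := norm ⁻¹' Icc 1 2

theorem isCompact_roundAnnulus : IsCompact roundAnnulus :=
  (isCompact_closedBall (0 : ℂ) 2).of_isClosed_subset (isClosed_Icc.preimage continuous_norm)
    fun _ hz ↦ mem_closedBall_zero_iff.2 hz.2

theorem ne_zero_of_mem_roundAnnulus {z : ℂ} (hz : z ∈ roundAnnulus) : z ≠ 0 :=
  norm_pos_iff.1 (one_pos.trans_le hz.1)

theorem sphere_subset_roundAnnulus : sphere (0 : ℂ) (3 / 2) ⊆ roundAnnulus := fun z hz ↦ by
  rw [roundAnnulus, mem_preimage, mem_sphere_zero_iff_norm.1 hz]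
  norm_num

/-- A homeomorphism between `A` and the round annulus, given by its extensions to maps between the
ambient spaces. -/
structure AnnulusChart {M : Type*} [TopologicalSpace M] (A : Set M) where
  /-- The annular coordinate, meaningful on `A`. -/
  coord : M → ℂ
  /-- The parametrization of `A`, meaningful on the round annulus. -/
  param : ℂ → M
  mapsTo_coord : MapsTo coord A roundAnnulus
  mapsTo_param : MapsTo param roundAnnulus A
  continuousOn_coord : ContinuousOn coord A
  continuousOn_param : ContinuousOn param roundAnnulus
  invOn : InvOn param coord A roundAnnulus

theorem exists_homeomorph_norm_eq {E F : Type*} [NormedAddCommGroup E] [NormedSpace ℝ E]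
    [NormedAddCommGroup F] [NormedSpace ℝ F] (T : E ≃L[ℝ] F) :
    ∃ h : E ≃ₜ F, ∀ x, ‖h x‖ = ‖x‖ := by
  have hb : Bornology.IsVonNBounded ℝ (T ⁻¹' ball 0 1) := by
    rw [← T.image_symm_eq_preimage]
    exact (NormedSpace.isVonNBounded_ball ℝ F 1).image T.symm.toContinuousLinearMap
  have h0 : T ⁻¹' ball 0 1 ∈ 𝓝 (0 : E) :=
    T.continuous.continuousAt.preimage_mem_nhds (by simpa using ball_mem_nhds (0 : F) one_pos)
  have hgauge : ∀ x, gauge (T ⁻¹' ball 0 1) x = ‖T x‖ := fun x ↦ by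
    simp only [← gauge_unit_ball (T x), gauge_def', mem_preimage, map_smul]
  set R := gaugeRescaleHomeomorph (ball (0 : E) 1) (T ⁻¹' ball 0 1) (convex_ball 0 1)
    (ball_mem_nhds 0 one_pos) (NormedSpace.isVonNBounded_ball ℝ E 1)
    ((convex_ball (0 : F) 1).linear_preimage T.toLinearMap) h0 hb
  refine ⟨R.trans T.toHomeomorph, fun x ↦ ?_⟩
  rw [← gauge_unit_ball x, ← gauge_gaugeRescale (ball 0 1) (absorbent_nhds_zero h0) hb x, hgauge]
  rfl

theorem mem_annulusModel {v : ℝ × ℝ} : v ∈ annulusModel ↔ ‖v‖ ∈ Icc 1 2 := by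
  simp only [annulusModel, Set.mem_sdiff, mem_closedBall, mem_ball, dist_zero_right, not_lt,
    mem_Icc]
  exact and_comm

theorem nonempty_homeomorph_annulusModel_roundAnnulus :
    Nonempty (annulusModel ≃ₜ roundAnnulus) := by
  obtain ⟨h, hh⟩ := exists_homeomorph_norm_eq Complex.equivRealProdCLM.symm
  exact ⟨h.subtype fun v ↦ by rw [mem_annulusModel, roundAnnulus, mem_preimage, hh]⟩

section AnnulusChart

variable {M : Type*} [TopologicalSpace M] {A : Set M}

theorem nonempty_annulusChart (h : Nonempty (A ≃ₜ annulusModel)) : Nonempty (AnnulusChart A) := by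
  obtain ⟨e⟩ := h
  obtain ⟨e'⟩ := nonempty_homeomorph_annulusModel_roundAnnulus
  set φ : A ≃ₜ roundAnnulus := e.trans e'
  have ha : (3 / 2 : ℂ) ∈ roundAnnulus := sphere_subset_roundAnnulus (by simp)
  set coord : M → ℂ := Function.extend Subtype.val (Subtype.val ∘ φ) 0
  set param : ℂ → M :=
    Function.extend Subtype.val (Subtype.val ∘ φ.symm) fun _ ↦ φ.symm ⟨3 / 2, ha⟩
  have hcoord : ∀ y : A, coord y = φ y := Subtype.val_injective.extend_apply _ _
  have hparam : ∀ z : roundAnnulus, param z = φ.symm z := Subtype.val_injective.extend_apply _ _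
  refine ⟨⟨coord, param, fun y hy ↦ ?_, fun z hz ↦ ?_, ?_, ?_, fun y hy ↦ ?_, fun z hz ↦ ?_⟩⟩
  · rw [hcoord ⟨y, hy⟩]
    exact (φ _).2
  · rw [hparam ⟨z, hz⟩]
    exact (φ.symm _).2
  · rw [continuousOn_iff_continuous_domRestrict, show A.domRestrict coord = _ from funext hcoord]
    exact continuous_subtype_val.comp φ.continuous
  · rw [continuousOn_iff_continuous_domRestrict,
      show roundAnnulus.domRestrict param = _ from funext hparam]
    exact continuous_subtype_val.comp φ.symm.continuous
  · rw [hcoord ⟨y, hy⟩, hparam, φ.symm_apply_apply]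
  · rw [hparam ⟨z, hz⟩, hcoord, φ.apply_symm_apply]

namespace AnnulusChart

variable (e : AnnulusChart A)

theorem coord_ne_zero {y : M} (hy : y ∈ A) : e.coord y ≠ 0 :=
  ne_zero_of_mem_roundAnnulus (e.mapsTo_coord hy)

theorem param_coord {y : M} (hy : y ∈ A) : e.param (e.coord y) = y := e.invOn.1 hy

theorem coord_param {z : ℂ} (hz : z ∈ roundAnnulus) : e.coord (e.param z) = z := e.invOn.2 hz

theorem injOn_coord : InjOn e.coord A := e.invOn.1.injOn

theorem injOn_param : InjOn e.param roundAnnulus := e.invOn.2.injOn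

/-- The core circle of an annulus, which the chart maps to the circle of radius `3 / 2`. -/
def core : Set M := {y ∈ A | ‖e.coord y‖ = 3 / 2}

theorem core_subset : e.core ⊆ A := sep_subset _ _

theorem image_param_sphere : e.param '' sphere 0 (3 / 2) = e.core := by
  ext y
  constructor
  · rintro ⟨z, hz, rfl⟩
    have hz' := sphere_subset_roundAnnulus hz
    exact ⟨e.mapsTo_param hz', by rwa [e.coord_param hz', ← mem_sphere_zero_iff_norm]⟩
  · rintro ⟨hy, hnorm⟩
    exact ⟨_, mem_sphere_zero_iff_norm.2 hnorm, e.param_coord hy⟩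

theorem isCompact_core : IsCompact e.core :=
  e.image_param_sphere ▸ (isCompact_sphere _ _).image_of_continuousOn
    (e.continuousOn_param.mono sphere_subset_roundAnnulus)

theorem core_subset_interior (hM : IsSurface M) : e.core ⊆ interior A := by
  have hopen : IsOpen (norm ⁻¹' Ioo 1 2 : Set ℂ) := isOpen_Ioo.preimage continuous_norm
  have hsub : norm ⁻¹' Ioo 1 2 ⊆ roundAnnulus := preimage_mono Ioo_subset_Icc_self
  rw [← e.image_param_sphere]
  refine (image_mono fun z hz ↦ ?_).trans (interior_maximal
    ((image_mono hsub).trans e.mapsTo_param.image_subset)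
    (hM.isOpen_image_of_injOn hopen (e.continuousOn_param.mono hsub) (e.injOn_param.mono hsub)))
  rw [mem_preimage, mem_sphere_zero_iff_norm.1 hz]
  norm_num

end AnnulusChart

end AnnulusChart

/-! ### Core multicurves bound no planar region -/

theorem isOpen_image_norm {E : Type*} [NormedAddCommGroup E] [NormedSpace ℝ E] {V : Set E}
    (hV : IsOpen V) (h0 : 0 ∉ V) : IsOpen (norm '' V) := by
  rw [isOpen_iff_mem_nhds, forall_mem_image]
  intro w hw
  have hw0 : 0 < ‖w‖ := norm_pos_iff.2 fun h ↦ h0 (h ▸ hw)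
  have hcont : ContinuousAt (fun t : ℝ ↦ (t / ‖w‖) • w) ‖w‖ := by fun_prop
  have hmem : (‖w‖ / ‖w‖) • w ∈ V := by rwa [div_self hw0.ne', one_smul]
  filter_upwards [hcont.preimage_mem_nhds (hV.mem_nhds hmem), lt_mem_nhds hw0] with t ht ht0
  refine ⟨_, ht, ?_⟩
  rw [norm_smul, norm_div, norm_norm, div_mul_cancel₀ _ hw0.ne', Real.norm_of_nonneg ht0.le]

theorem exists_norm_eq_of_diff_subset_sphere {E : Type*} [NormedAddCommGroup E] [NormedSpace ℝ E]
    {F V : Set E} {r : ℝ} (hF : IsCompact F) (h0 : 0 ∉ F) (hV : IsOpen V) (hVF : V ⊆ F)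
    (hne : V.Nonempty) (hr : F \ V ⊆ sphere 0 r) : ∃ z ∈ V, ‖z‖ = r := by
  have hopen : IsOpen (norm '' V) := isOpen_image_norm hV fun h ↦ h0 (hVF h)
  obtain ⟨z, hz⟩ := hne
  obtain ⟨a, ha, hmin⟩ := hF.exists_isMinOn ⟨z, hVF hz⟩ continuous_norm.continuousOn
  obtain ⟨b, hb, hmax⟩ := hF.exists_isMaxOn ⟨z, hVF hz⟩ continuous_norm.continuousOn
  have har : ‖a‖ = r := mem_sphere_zero_iff_norm.1 <| hr ⟨ha, fun haV ↦ by
    have hnear : ∀ᶠ t in 𝓝[<] ‖a‖, t ∈ norm '' V :=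
      nhdsWithin_le_nhds (hopen.mem_nhds ⟨a, haV, rfl⟩)
    obtain ⟨_, ⟨w, hw, rfl⟩, hta⟩ := (hnear.and self_mem_nhdsWithin).exists
    exact (hmin (hVF hw)).not_gt hta⟩
  have hbr : ‖b‖ = r := mem_sphere_zero_iff_norm.1 <| hr ⟨hb, fun hbV ↦ by
    have hnear : ∀ᶠ t in 𝓝[>] ‖b‖, t ∈ norm '' V :=
      nhdsWithin_le_nhds (hopen.mem_nhds ⟨b, hbV, rfl⟩)
    obtain ⟨_, ⟨w, hw, rfl⟩, htb⟩ := (hnear.and self_mem_nhdsWithin).exists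
    exact (hmax (hVF hw)).not_gt htb⟩
  exact ⟨z, hz, le_antisymm (hbr ▸ hmax (hVF hz)) (har ▸ hmin (hVF hz))⟩

/-- No connected component of `T` is compact. -/
def HasNoCompactComponents {X : Type*} [TopologicalSpace X] (T : Set X) : Prop :=
  ∀ x ∈ T, ¬ IsCompact (connectedComponentIn T x)

theorem isClosed_connectedComponentIn {X : Type*} [TopologicalSpace X] {T : Set X}
    (hT : IsClosed T) (x : X) : IsClosed (connectedComponentIn T x) := by
  by_cases hx : x ∈ T
  · rw [connectedComponentIn_eq_image hx]
    exact hT.isClosedEmbedding_subtypeVal.isClosedMap _ isClosed_connectedComponent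
  · rw [connectedComponentIn_eq_empty hx]
    exact isClosed_empty

theorem HasNoCompactComponents.disjoint_of_disjoint_diff {X : Type*} [TopologicalSpace X]
    [T2Space X] {T P Q : Set X} (hT : HasNoCompactComponents T) (hTclosed : IsClosed T)
    (hP : IsCompact P) (hQ : IsOpen Q) (hQP : Q ⊆ P) (hdisj : Disjoint (P \ Q) T) :
    Disjoint P T := by
  rw [disjoint_left] at hdisj ⊢
  intro x hxP hxT
  refine hT x hxT ?_
  have hcover : connectedComponentIn T x ⊆ Q ∪ Pᶜ := fun y hy ↦ by
    by_contra hyQ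
    rw [mem_union, not_or, notMem_compl_iff] at hyQ
    exact hdisj ⟨hyQ.2, hyQ.1⟩ (connectedComponentIn_subset _ _ hy)
  have hxQ : x ∈ Q := by_contra fun hxQ ↦ hdisj ⟨hxP, hxQ⟩ hxT
  have hsub : connectedComponentIn T x ⊆ Q :=
    isPreconnected_connectedComponentIn.subset_left_of_subset_union hQ hP.isClosed.isOpen_compl
      (disjoint_compl_right_iff_subset.2 hQP) hcover ⟨x, mem_connectedComponentIn hxT, hxQ⟩
  exact hP.of_isClosed_subset (isClosed_connectedComponentIn hTclosed x) (hsub.trans hQP)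

theorem frontier_connectedComponentIn_subset_compl {X : Type*} [TopologicalSpace X]
    [LocallyConnectedSpace X] {U : Set X} (hU : IsOpen U) (x : X) :
    frontier (connectedComponentIn U x) ⊆ Uᶜ := by
  intro z hz hzU
  rw [hU.connectedComponentIn.frontier_eq] at hz
  obtain ⟨w, hwz, hwx⟩ := mem_closure_iff.1 hz.1 _ (hU.connectedComponentIn (x := z))
    (mem_connectedComponentIn hzU)
  exact hz.2 (connectedComponentIn_eq hwx ▸ connectedComponentIn_eq hwz ▸
    mem_connectedComponentIn hzU)

section Multicurve

variable {M : Type*} [TopologicalSpace M]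

/-- `J` is a union of core circles of annular components of `S`, one in each component of `S` that
meets `J`. -/
def IsCoreMulticurve (S J : Set M) : Prop :=
  J ⊆ S ∧ ∀ y ∈ J, ∃ e : AnnulusChart (connectedComponentIn S y),
    J ∩ connectedComponentIn S y = e.core

variable {S J : Set M}

theorem AnnulusChart.isCoreMulticurve {x : M} (e : AnnulusChart (connectedComponentIn S x)) :
    IsCoreMulticurve S e.core := by
  refine ⟨e.core_subset.trans (connectedComponentIn_subset S x), fun y hy ↦ ?_⟩
  rw [← connectedComponentIn_eq (e.core_subset hy)]
  exact ⟨e, inter_eq_left.2 e.core_subset⟩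

theorem AnnulusChart.isCoreMulticurve_union {x y : M}
    (ex : AnnulusChart (connectedComponentIn S x)) (ey : AnnulusChart (connectedComponentIn S y))
    (hdisj : Disjoint (connectedComponentIn S x) (connectedComponentIn S y)) :
    IsCoreMulticurve S (ex.core ∪ ey.core) := by
  refine ⟨union_subset ex.isCoreMulticurve.1 ey.isCoreMulticurve.1, ?_⟩
  rintro z (hz | hz)
  · rw [← connectedComponentIn_eq (ex.core_subset hz)]
    exact ⟨ex, by rw [union_inter_distrib_right, inter_eq_left.2 ex.core_subset,
      (hdisj.symm.mono_left ey.core_subset).inter_eq, union_empty]⟩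
  · rw [← connectedComponentIn_eq (ey.core_subset hz)]
    exact ⟨ey, by rw [union_inter_distrib_right, inter_eq_left.2 ey.core_subset,
      (hdisj.mono_left ex.core_subset).inter_eq, empty_union]⟩

namespace IsCoreMulticurve

theorem subset_interior (hM : IsSurface M) (hJ : IsCoreMulticurve S J) : J ⊆ interior S := by
  intro y hy
  obtain ⟨e, he⟩ := hJ.2 y hy
  have hye : y ∈ e.core := he ▸ ⟨hy, mem_connectedComponentIn (hJ.1 hy)⟩
  exact interior_mono (connectedComponentIn_subset S y) (e.core_subset_interior hM hye)

/-- In the annular coordinate, the modulus would attain both its extrema over the region on the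
core circle. -/
theorem not_exists_region_in_complement (hJ : IsCoreMulticurve S J) {V : Set ℂ} {g : ℂ → M}
    (hV : IsOpen V) (hconn : IsConnected V) (hcpt : IsCompact (closure V))
    (hg : ContinuousOn g (closure V)) (hinj : InjOn g (closure V)) (hgS : MapsTo g (closure V) S)
    (hfrontier : MapsTo g (frontier V) J) : ¬ MapsTo g V Jᶜ := by
  obtain ⟨z₀, hz₀⟩ : (frontier V).Nonempty := nonempty_frontier_iff.2 ⟨hconn.nonempty, fun h ↦
    noncompact_univ ℂ (by rwa [h, closure_univ] at hcpt)⟩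
  intro hgV
  obtain ⟨e, he⟩ := hJ.2 _ (hfrontier hz₀)
  have hgC : MapsTo g (closure V) (connectedComponentIn S (g z₀)) := mapsTo_iff_image_subset.2 <|
    (hconn.isPreconnected.closure.image g hg).subset_connectedComponentIn
      (mem_image_of_mem g (frontier_subset_closure hz₀)) hgS.image_subset
  have hcont : ContinuousOn (e.coord ∘ g) (closure V) := e.continuousOn_coord.comp hg hgC
  have hinj' : InjOn (e.coord ∘ g) (closure V) := e.injOn_coord.comp hinj hgC
  have hzero : 0 ∉ e.coord ∘ g '' closure V := by
    rintro ⟨z, hz, hz0⟩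
    exact e.coord_ne_zero (hgC hz) hz0
  have hsphere : e.coord ∘ g '' closure V \ e.coord ∘ g '' V ⊆ sphere 0 (3 / 2) := by
    rintro _ ⟨⟨z, hz, rfl⟩, hzV⟩
    have hzJ : g z ∈ J :=
      hfrontier (hV.frontier_eq ▸ ⟨hz, fun h ↦ hzV (mem_image_of_mem _ h)⟩)
    exact mem_sphere_zero_iff_norm.2 (he ▸ ⟨hzJ, hgC hz⟩ : g z ∈ e.core).2
  obtain ⟨_, ⟨z, hz, rfl⟩, hnorm⟩ := exists_norm_eq_of_diff_subset_sphere
    (hcpt.image_of_continuousOn hcont) hzero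
    (isOpen_image_of_injOn hV (hcont.mono subset_closure) (hinj'.mono subset_closure))
    (image_mono subset_closure) (hconn.nonempty.image _) hsphere
  have hzcore : g z ∈ e.core := ⟨hgC (subset_closure hz), hnorm⟩
  exact hgV hz (he.ge hzcore).1

theorem not_exists_region [T2Space M] (hM : IsSurface M) {L U : Set M}
    (hL : HasNoCompactComponents (interior L)ᶜ) (hJ : IsCoreMulticurve (L \ U) J) {V : Set ℂ}
    {g : ℂ → M} (hV : IsOpen V) (hconn : IsConnected V) (hcpt : IsCompact (closure V))
    (hg : ContinuousOn g (closure V)) (hinj : InjOn g (closure V))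
    (hgU : MapsTo g (closure V) Uᶜ) (hfrontier : MapsTo g (frontier V) J) :
    ¬ MapsTo g V Jᶜ := by
  have hdiff : g '' closure V \ g '' V ⊆ interior L := by
    rintro _ ⟨⟨z, hz, rfl⟩, hzV⟩
    exact interior_mono sdiff_subset (hJ.subset_interior hM
      (hfrontier (hV.frontier_eq ▸ ⟨hz, fun h ↦ hzV (mem_image_of_mem g h)⟩)))
  have hdisj : Disjoint (g '' closure V) (interior L)ᶜ :=
    hL.disjoint_of_disjoint_diff isOpen_interior.isClosed_compl (hcpt.image_of_continuousOn hg)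
      (hM.isOpen_image_of_injOn hV (hg.mono subset_closure) (hinj.mono subset_closure))
      (image_mono subset_closure) (disjoint_compl_right_iff_subset.2 hdiff)
  have hgL : MapsTo g (closure V) (interior L) :=
    mapsTo_iff_image_subset.2 (disjoint_compl_right_iff_subset.1 hdisj)
  exact hJ.not_exists_region_in_complement hV hconn hcpt hg hinj
    (fun z hz ↦ ⟨interior_subset (hgL hz), hgU hz⟩) hfrontier

end IsCoreMulticurve

theorem exists_hasLog_sub_mul_zpow {K : Set ℂ} (hK : IsClosed K) (hKA : K ⊆ roundAnnulus)
    {c : ℂ} (hc : c ∉ K) (hcomp : ¬ connectedComponentIn Kᶜ c ⊆ roundAnnulus) :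
    ∃ k : ℤ, HasLog (fun z ↦ (z - c) * z ^ k) K := by
  obtain ⟨c', hc', hc'A⟩ := not_subset.1 hcomp
  have hc'K : ∀ z ∈ K, z - c' ≠ 0 := fun z hz h ↦
    connectedComponentIn_subset Kᶜ c hc' (sub_eq_zero.1 h ▸ hz)
  have hratio : HasLog (fun z ↦ (z - c) / (z - c')) K :=
    hasLog_sub_div_sub_of_isPreconnected hK isPreconnected_connectedComponentIn
      (connectedComponentIn_subset Kᶜ c) hc' (mem_connectedComponentIn hc)
  obtain hlt | hge := lt_or_ge ‖c'‖ 1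
  · have hzero : HasLog (fun z ↦ (z - c') / (z - 0)) K :=
      hasLog_sub_div_sub_of_dist_lt fun z hz ↦ by
        rw [dist_zero_left, dist_zero_right]
        exact hlt.trans_le (hKA hz).1
    refine ⟨-1, (hratio.mul hzero).congr fun z hz ↦ ?_⟩
    simp only [sub_zero, zpow_neg_one, div_mul_div_cancel₀ (hc'K z hz)]
    rw [div_eq_mul_inv]
  · have hfar : HasLog (fun z ↦ z - c') (closedBall 0 2) :=
      hasLog_of_convex (isCompact_closedBall 0 2) (convex_closedBall 0 2) (by fun_prop)
        fun z hz h ↦ hc'A ⟨hge, sub_eq_zero.1 h ▸ mem_closedBall_zero_iff.1 hz⟩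
    refine ⟨0, (hratio.mul (hfar.mono fun z hz ↦ mem_closedBall_zero_iff.2 (hKA hz).2)).congr
      fun z hz ↦ ?_⟩
    simp only [zpow_zero, mul_one, div_mul_cancel₀ _ (hc'K z hz)]

theorem exists_hasLog_linearFactorProd_mul_zpow {K : Set ℂ} (hK : IsClosed K)
    (hKA : K ⊆ roundAnnulus) (hcomp : ∀ c ∉ K, ¬ connectedComponentIn Kᶜ c ⊆ roundAnnulus)
    {l : List (ℂ × ℤ)} (hl : ∀ p ∈ l, p.1 ∉ K) :
    ∃ k : ℤ, HasLog (fun z ↦ linearFactorProd l z * z ^ k) K := by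
  induction l with
  | nil => exact ⟨0, 0, continuousOn_const, fun z _ ↦ by simp [linearFactorProd]⟩
  | cons p l ih =>
    obtain ⟨hp, hl⟩ := List.forall_mem_cons.1 hl
    obtain ⟨k, hk⟩ := exists_hasLog_sub_mul_zpow hK hKA hp (hcomp p.1 hp)
    obtain ⟨n, hn⟩ := ih hl
    refine ⟨k * p.2 + n, ((hk.zpow p.2).mul hn).congr fun z hz ↦ ?_⟩
    rw [linearFactorProd_cons, zpow_add₀ (ne_zero_of_mem_roundAnnulus (hKA hz)), zpow_mul]
    simp only [mul_zpow]
    ring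

theorem IsCoreMulticurve.exists_hasLog_mul_coord_zpow [T2Space M] (hM : IsSurface M) {L U A : Set M}
    (hL : HasNoCompactComponents (interior L)ᶜ) (hJ : IsCoreMulticurve (L \ U) J)
    (hJc : IsCompact J) (e : AnnulusChart A) (hAU : A ⊆ Uᶜ) (hJA : J ⊆ A) {f : M → ℂ}
    (hf : ContinuousOn f J) (h0 : ∀ y ∈ J, f y ≠ 0) :
    ∃ k : ℤ, HasLog (fun y ↦ f y * e.coord y ^ k) J := by
  have hcont : ContinuousOn e.coord J := e.continuousOn_coord.mono hJA
  have hK : IsClosed (e.coord '' J) := (hJc.image_of_continuousOn hcont).isClosed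
  have hKA : e.coord '' J ⊆ roundAnnulus := (e.mapsTo_coord.mono_left hJA).image_subset
  have hcomp : ∀ c ∉ e.coord '' J, ¬ connectedComponentIn (e.coord '' J)ᶜ c ⊆ roundAnnulus := by
    intro c hc hsub
    have hclosure := closure_minimal hsub isCompact_roundAnnulus.isClosed
    refine hJ.not_exists_region hM hL hK.isOpen_compl.connectedComponentIn
      (isConnected_connectedComponentIn_iff.2 hc)
      (isCompact_roundAnnulus.of_isClosed_subset isClosed_closure hclosure)
      (e.continuousOn_param.mono hclosure) (e.injOn_param.mono hclosure)
      (fun z hz ↦ hAU (e.mapsTo_param (hclosure hz))) (fun z hz ↦ ?_) fun z hz hzJ ↦ ?_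
    · obtain ⟨y, hy, rfl⟩ := compl_compl (e.coord '' J) ▸
        frontier_connectedComponentIn_subset_compl hK.isOpen_compl c hz
      rwa [e.param_coord (hJA hy)]
    · exact connectedComponentIn_subset _ c hz ⟨_, hzJ, e.coord_param (hsub hz)⟩
  obtain ⟨l, hl, hlog⟩ :=
    exists_hasLog_mul_linearFactorProd_comp hJc hf h0 hcont (e.injOn_coord.mono hJA)
  obtain ⟨k, hk⟩ := exists_hasLog_linearFactorProd_mul_zpow hK hKA hcomp hl
  refine ⟨-k, HasLog.of_mul (hlog.congr fun y hy ↦ ?_) (hk.comp hcont (mapsTo_image e.coord J))⟩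
  have hne := zpow_ne_zero k (e.coord_ne_zero (hJA hy))
  simp only [zpow_neg]
  field_simp

end Multicurve

/-! ### Variation of the logarithm along paths -/

section LogVariation

variable {X : Type*} [TopologicalSpace X] {f g : X → ℂ} {S : Set X} {a b c : X} {p q : Path a b}
  {v w : ℂ}

/-- `v` is the increment along `p` of a continuous branch of `log f`; for a loop `p` it is `2πi`
times the winding number of `f ∘ p` about `0`. -/
def LogVariation (f : X → ℂ) (p : Path a b) (v : ℂ) : Prop :=
  ∃ u : I → ℂ, Continuous u ∧ (∀ t, f (p t) = Complex.exp (u t)) ∧ u 1 - u 0 = v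

theorem exists_logVariation (hf : ContinuousOn f S) (h0 : ∀ y ∈ S, f y ≠ 0) (hp : ∀ t, p t ∈ S) :
    ∃ v, LogVariation f p v := by
  obtain ⟨u, hu, hfu⟩ := HasLog.of_injOn isCompact_univ continuous_subtype_val
    Subtype.val_injective.injOn (hf.comp_continuous p.continuous hp).continuousOn
    fun t _ ↦ h0 _ (hp t)
  exact ⟨_, u, continuousOn_univ.1 hu, fun t ↦ hfu t (mem_univ t), rfl⟩

theorem HasLog.logVariation_loop {p : Path a a} (h : HasLog f S) (hp : ∀ t, p t ∈ S) :
    LogVariation f p 0 := by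
  obtain ⟨u, hu, hfu⟩ := h
  exact ⟨u ∘ p, hu.comp_continuous p.continuous hp, fun t ↦ hfu _ (hp t), by simp⟩

namespace LogVariation

theorem mul (hf : LogVariation f p v) (hg : LogVariation g p w) :
    LogVariation (fun y ↦ f y * g y) p (v + w) := by
  obtain ⟨u, hu, hfu, rfl⟩ := hf
  obtain ⟨u', hu', hgu, rfl⟩ := hg
  refine ⟨u + u', hu.add hu', fun t ↦ ?_, by simp only [Pi.add_apply]; ring⟩
  simp only [hfu, hgu, Pi.add_apply, Complex.exp_add]

theorem zpow (h : LogVariation f p v) (k : ℤ) : LogVariation (fun y ↦ f y ^ k) p (k * v) := by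
  obtain ⟨u, hu, hfu, rfl⟩ := h
  refine ⟨fun t ↦ k * u t, by fun_prop, fun t ↦ ?_, by ring⟩
  simp only [hfu, Complex.exp_int_mul]

theorem congr (h : LogVariation f p v) (hp : ∀ t, p t ∈ S) (hgf : ∀ y ∈ S, g y = f y) :
    LogVariation g p v := by
  obtain ⟨u, hu, hfu, hv⟩ := h
  exact ⟨u, hu, fun t ↦ (hgf _ (hp t)).trans (hfu t), hv⟩

theorem unique (hv : LogVariation f p v) (hw : LogVariation f p w) : v = w := by
  obtain ⟨u, hu, hfu, rfl⟩ := hv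
  obtain ⟨u', hu', hfu', rfl⟩ := hw
  obtain ⟨n, hn⟩ := exists_int_of_exp_eq_of_isPreconnected isPreconnected_univ hu.continuousOn
    hu'.continuousOn fun t _ ↦ (hfu t).symm.trans (hfu' t)
  rw [hn 1 (mem_univ 1), hn 0 (mem_univ 0), add_sub_add_right_eq_sub]

theorem exists_sub_eq_int_mul (hp : LogVariation f p v) (hq : LogVariation f q w) :
    ∃ n : ℤ, v - w = n * (2 * Real.pi * Complex.I) := by
  obtain ⟨u, -, hfu, rfl⟩ := hp
  obtain ⟨u', -, hfu', rfl⟩ := hq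
  have hsource : Complex.exp (u 0) = Complex.exp (u' 0) := by
    rw [← hfu, ← hfu', p.source, q.source]
  have htarget : Complex.exp (u 1) = Complex.exp (u' 1) := by
    rw [← hfu, ← hfu', p.target, q.target]
  rw [← Complex.exp_eq_one_iff, Complex.exp_sub, Complex.exp_sub, Complex.exp_sub, hsource, htarget]
  exact div_self (div_ne_zero (Complex.exp_ne_zero _) (Complex.exp_ne_zero _))

theorem exists_lift (h : LogVariation f p v) {z : ℂ} (hz : f a = Complex.exp z) :
    ∃ u : Path z (z + v), ∀ t, f (p t) = Complex.exp (u t) := by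
  obtain ⟨u, hu, hfu, rfl⟩ := h
  have hexp : Complex.exp z = Complex.exp (u 0) := by rw [← hz, ← hfu, p.source]
  refine ⟨⟨⟨fun t ↦ z + (u t - u 0), by fun_prop⟩, by simp, rfl⟩, fun t ↦ ?_⟩
  change f (p t) = Complex.exp (z + (u t - u 0))
  rw [Complex.exp_add, Complex.exp_sub, hexp, mul_div_cancel₀ _ (Complex.exp_ne_zero _), hfu]

theorem of_lift {z z' : ℂ} (u : Path z z') (hu : ∀ t, f (p t) = Complex.exp (u t)) :
    LogVariation f p (z' - z) :=
  ⟨u, u.continuous, hu, by rw [u.source, u.target]⟩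

theorem trans {q : Path b c} (hp : LogVariation f p v) (hq : LogVariation f q w) :
    LogVariation f (p.trans q) (v + w) := by
  obtain ⟨z, hz⟩ : ∃ z, f a = Complex.exp z := by
    obtain ⟨u, -, hfu, -⟩ := hp
    exact ⟨u 0, by rw [← hfu, p.source]⟩
  obtain ⟨u, hu⟩ := hp.exists_lift hz
  obtain ⟨u', hu'⟩ := hq.exists_lift (z := z + v) (by rw [← p.target, hu, u.target])
  have h := of_lift (f := f) (p := p.trans q) (u.trans u') fun t ↦ by
    rw [Path.trans_apply, Path.trans_apply]
    split_ifs
    exacts [hu _, hu' _]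
  rwa [add_assoc, add_sub_cancel_left] at h

theorem add_mul_eq_zero {p : Path a a} {k : ℤ} (hf : LogVariation f p w) (hg : LogVariation g p v)
    (hlog : HasLog (fun y ↦ f y * g y ^ k) S) (hp : ∀ t, p t ∈ S) : w + k * v = 0 :=
  (hf.mul (hg.zpow k)).unique (hlog.logVariation_loop hp)

end LogVariation

end LogVariation

theorem convex_exp_preimage_roundAnnulus : Convex ℝ (Complex.exp ⁻¹' roundAnnulus) := by
  have h : Complex.exp ⁻¹' roundAnnulus = Complex.reLm ⁻¹' Icc 0 (Real.log 2) := by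
    ext z
    simp only [roundAnnulus, mem_preimage, mem_Icc, Complex.norm_exp, Real.one_le_exp_iff,
      Real.le_log_iff_exp_le two_pos, Complex.reLm_coe]
  exact h ▸ (convex_Icc 0 (Real.log 2)).linear_preimage Complex.reLm

namespace AnnulusChart

variable {M : Type*} [TopologicalSpace M] {A : Set M} (e : AnnulusChart A)

theorem isPathConnected (e : AnnulusChart A) : IsPathConnected A := by
  have himage : e.param ∘ Complex.exp '' (Complex.exp ⁻¹' roundAnnulus) = A := by
    refine Subset.antisymm (by rintro _ ⟨z, hz, rfl⟩; exact e.mapsTo_param hz) fun y hy ↦ ?_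
    have hexp : Complex.exp (Complex.log (e.coord y)) = e.coord y :=
      Complex.exp_log (e.coord_ne_zero hy)
    exact ⟨_, mem_preimage.2 (hexp.symm ▸ e.mapsTo_coord hy),
      (congrArg e.param hexp).trans (e.param_coord hy)⟩
  rw [← himage]
  exact (convex_exp_preimage_roundAnnulus.isPathConnected ⟨0, by simp [roundAnnulus]⟩).image'
    (e.continuousOn_param.comp Complex.continuous_exp.continuousOn fun _ h ↦ h)

theorem exists_logVariation {a b : M} {p : Path a b} (hp : ∀ t, p t ∈ A) :
    ∃ v, LogVariation e.coord p v :=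
  _root_.exists_logVariation e.continuousOn_coord (fun _ ↦ e.coord_ne_zero) hp

theorem homotopic_of_logVariation_eq {a b : M} {p q : Path a b} {v : ℂ} (hp : ∀ t, p t ∈ A)
    (hq : ∀ t, q t ∈ A) (hpv : LogVariation e.coord p v) (hqv : LogVariation e.coord q v) :
    p.Homotopic q := by
  have ha : e.coord a = Complex.exp (Complex.log (e.coord a)) :=
    (Complex.exp_log (e.coord_ne_zero (p.source ▸ hp 0))).symm
  obtain ⟨u, hu⟩ := hpv.exists_lift ha
  obtain ⟨w, hw⟩ := hqv.exists_lift ha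
  have hmem (s : I × I) :
      Complex.exp (AffineMap.lineMap (u s.2) (w s.2) (s.1 : ℝ)) ∈ roundAnnulus :=
    convex_exp_preimage_roundAnnulus.lineMap_mem
      (mem_preimage.2 (hu s.2 ▸ e.mapsTo_coord (hp s.2)))
      (mem_preimage.2 (hw s.2 ▸ e.mapsTo_coord (hq s.2))) s.1.2
  have hcont : Continuous fun s : I × I ↦
      Complex.exp (AffineMap.lineMap (u s.2) (w s.2) (s.1 : ℝ)) := by
    simp only [AffineMap.lineMap_apply_module]
    fun_prop
  refine ⟨⟨⟨⟨_, e.continuousOn_param.comp_continuous hcont hmem⟩, fun t ↦ ?_, fun t ↦ ?_⟩, ?_⟩⟩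
  · simp [← hu, e.param_coord (hp t)]
  · simp [← hw, e.param_coord (hq t)]
  · rintro s t (rfl | rfl)
    · simp [← ha, e.param_coord (p.source ▸ hp 0 : a ∈ A)]
    · have h1 := hu 1
      simp only [Path.target] at h1
      simp [← h1, e.param_coord (p.target ▸ hp 1 : b ∈ A)]

theorem circle_mem_sphere (x : ℝ) :
    3 / 2 * Complex.exp (x * Complex.I) ∈ sphere (0 : ℂ) (3 / 2) := by
  rw [mem_sphere_zero_iff_norm, norm_mul, Complex.norm_exp_ofReal_mul_I]
  norm_num

/-- The loop running `N` times around the core circle. -/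
noncomputable def coreLoop (N : ℤ) : Path (e.param (3 / 2)) (e.param (3 / 2)) where
  toFun t := e.param (3 / 2 * Complex.exp ((2 * Real.pi * N * t : ℝ) * Complex.I))
  continuous_toFun := (e.continuousOn_param.mono sphere_subset_roundAnnulus).comp_continuous
    (by fun_prop) fun _ ↦ circle_mem_sphere _
  source' := by simp
  target' := by
    have hexp : Complex.exp ((2 * Real.pi * N * (1 : I) : ℝ) * Complex.I) = 1 :=
      Complex.exp_eq_one_iff.2 ⟨N, by push_cast; ring⟩
    rw [hexp, mul_one]

theorem coreLoop_mem_core (N : ℤ) (t : I) : e.coreLoop N t ∈ e.core :=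
  e.image_param_sphere ▸ mem_image_of_mem e.param (circle_mem_sphere _)

theorem logVariation_coord_coreLoop (N : ℤ) :
    LogVariation e.coord (e.coreLoop N) (N * (2 * Real.pi * Complex.I)) := by
  refine ⟨fun t ↦ Complex.log (3 / 2) + (2 * Real.pi * N * t : ℝ) * Complex.I, by fun_prop,
    fun t ↦ ?_, by push_cast; simp; ring⟩
  rw [Complex.exp_add, Complex.exp_log (by norm_num)]
  exact e.coord_param (sphere_subset_roundAnnulus (circle_mem_sphere _))

end AnnulusChart

/-! ### Pushing paths out of annular collars -/

theorem connectedComponentIn_eq_or_disjoint {X : Type*} [TopologicalSpace X] (S : Set X) (x y : X) :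
    connectedComponentIn S x = connectedComponentIn S y ∨
      Disjoint (connectedComponentIn S x) (connectedComponentIn S y) := by
  refine or_iff_not_imp_right.2 fun h ↦ ?_
  obtain ⟨z, hzx, hzy⟩ := not_disjoint_iff.1 h
  exact (connectedComponentIn_eq hzx).trans (connectedComponentIn_eq hzy).symm

theorem forall_trans_mem {X : Type*} [TopologicalSpace X] {S : Set X} {a b c : X} {p : Path a b}
    {q : Path b c} (hp : ∀ t, p t ∈ S) (hq : ∀ t, q t ∈ S) (t : I) : p.trans q t ∈ S := by
  rw [← range_subset_iff] at hp hq
  exact (Path.trans_range p q ▸ union_subset hp hq : range (p.trans q) ⊆ S) (mem_range_self t)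

theorem forall_subpath_mem {X : Type*} [TopologicalSpace X] {S : Set X} {a b : X} {p : Path a b}
    {s t : I} (hst : s ≤ t) (h : Icc s t ⊆ p ⁻¹' S) (r : I) : p.subpath s t r ∈ S :=
  image_subset_iff.2 h (Path.range_subpath_of_le p s t hst ▸ mem_range_self r)

namespace AnnulusChart

variable {M : Type*} [TopologicalSpace M] [T2Space M] {L U A : Set M} {x y : M}

theorem exists_int_mul_logVariation_coreLoop (hM : IsSurface M)
    (hL : HasNoCompactComponents (interior L)ᶜ) (e : AnnulusChart A) (hAU : A ⊆ Uᶜ)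
    (ex : AnnulusChart (connectedComponentIn (L \ U) x))
    (hx : connectedComponentIn (L \ U) x ⊆ A) :
    ∃ k : ℤ, ∀ N v, LogVariation e.coord (ex.coreLoop N) v →
      N * (2 * Real.pi * Complex.I) + k * v = 0 := by
  obtain ⟨k, hk⟩ := ex.isCoreMulticurve.exists_hasLog_mul_coord_zpow hM hL ex.isCompact_core e hAU
    (ex.core_subset.trans hx) (ex.continuousOn_coord.mono ex.core_subset)
    fun z hz ↦ ex.coord_ne_zero (ex.core_subset hz)
  exact ⟨k, fun N v hv ↦
    (ex.logVariation_coord_coreLoop N).add_mul_eq_zero hv hk (ex.coreLoop_mem_core N)⟩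

theorem logVariation_coreLoop_ne_zero (hM : IsSurface M)
    (hL : HasNoCompactComponents (interior L)ᶜ) (e : AnnulusChart A) (hAU : A ⊆ Uᶜ)
    (ex : AnnulusChart (connectedComponentIn (L \ U) x))
    (hx : connectedComponentIn (L \ U) x ⊆ A) {v : ℂ}
    (hv : LogVariation e.coord (ex.coreLoop 1) v) : v ≠ 0 := by
  rintro rfl
  obtain ⟨k, hk⟩ := exists_int_mul_logVariation_coreLoop hM hL e hAU ex hx
  simpa using hk 1 0 hv

/-- Otherwise a function equal to the coordinate on one core and to `1` on the other would wind
around one of the two cores only, whereas up to a logarithm it is a power of the coordinate of `A`,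
which winds around both. -/
theorem connectedComponentIn_eq_of_subset (hM : IsSurface M)
    (hL : HasNoCompactComponents (interior L)ᶜ) (e : AnnulusChart A) (hAU : A ⊆ Uᶜ)
    (ex : AnnulusChart (connectedComponentIn (L \ U) x))
    (hx : connectedComponentIn (L \ U) x ⊆ A)
    (ey : AnnulusChart (connectedComponentIn (L \ U) y))
    (hy : connectedComponentIn (L \ U) y ⊆ A) :
    connectedComponentIn (L \ U) x = connectedComponentIn (L \ U) y := by
  classical
  refine (connectedComponentIn_eq_or_disjoint (L \ U) x y).resolve_right fun hdisj ↦ ?_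
  let f : M → ℂ := (connectedComponentIn (L \ U) x).piecewise ex.coord 1
  have hfx : EqOn f ex.coord ex.core := (piecewise_eqOn _ _ _).mono ex.core_subset
  have hfy : EqOn f 1 ey.core :=
    (piecewise_eqOn_compl _ _ _).mono (ey.core_subset.trans hdisj.subset_compl_left)
  have hf : ContinuousOn f (ex.core ∪ ey.core) := ContinuousOn.union_of_isClosed
    ((ex.continuousOn_coord.mono ex.core_subset).congr hfx) (continuousOn_const.congr hfy)
    ex.isCompact_core.isClosed ey.isCompact_core.isClosed
  have hf0 : ∀ z ∈ ex.core ∪ ey.core, f z ≠ 0 := by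
    rintro z (hz | hz)
    · exact hfx hz ▸ ex.coord_ne_zero (ex.core_subset hz)
    · exact hfy hz ▸ one_ne_zero
  obtain ⟨k, hk⟩ := (ex.isCoreMulticurve_union ey hdisj).exists_hasLog_mul_coord_zpow hM hL
    (ex.isCompact_core.union ey.isCompact_core) e hAU
    (union_subset (ex.core_subset.trans hx) (ey.core_subset.trans hy)) hf hf0
  obtain ⟨v, hv⟩ := e.exists_logVariation fun t ↦ hx (ex.core_subset (ex.coreLoop_mem_core 1 t))
  obtain ⟨w, hw⟩ := e.exists_logVariation fun t ↦ hy (ey.core_subset (ey.coreLoop_mem_core 1 t))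
  have hxk : ((1 : ℤ) : ℂ) * (2 * Real.pi * Complex.I) + k * v = 0 :=
    ((ex.logVariation_coord_coreLoop 1).congr (ex.coreLoop_mem_core 1) hfx).add_mul_eq_zero hv hk
      fun t ↦ Or.inl (ex.coreLoop_mem_core 1 t)
  have hone : LogVariation 1 (ey.coreLoop 1) 0 := ⟨0, continuous_const, fun t ↦ by simp, sub_self 0⟩
  have hyk : 0 + (k : ℂ) * w = 0 :=
    (hone.congr (ey.coreLoop_mem_core 1) hfy).add_mul_eq_zero hw hk
      fun t ↦ Or.inr (ey.coreLoop_mem_core 1 t)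
  rcases mul_eq_zero.1 ((zero_add _).symm.trans hyk) with hk0 | hw0
  · simp [hk0] at hxk
  · exact logVariation_coreLoop_ne_zero hM hL e hAU ey hy hw hw0

theorem exists_homotopic_of_subset (hM : IsSurface M)
    (hL : HasNoCompactComponents (interior L)ᶜ) (e : AnnulusChart A) (hAU : A ⊆ Uᶜ)
    (ex : AnnulusChart (connectedComponentIn (L \ U) x))
    (hx : connectedComponentIn (L \ U) x ⊆ A) {a b : M} (ha : a ∈ connectedComponentIn (L \ U) x)
    (hb : b ∈ connectedComponentIn (L \ U) x) (τ : Path a b) (hτ : ∀ t, τ t ∈ A) :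
    ∃ β : Path a b, (∀ t, β t ∈ connectedComponentIn (L \ U) x) ∧ τ.Homotopic β := by
  obtain ⟨k, hk⟩ := exists_int_mul_logVariation_coreLoop hM hL e hAU ex hx
  have hloop (N : ℤ) (t : I) : ex.coreLoop N t ∈ connectedComponentIn (L \ U) x :=
    ex.core_subset (ex.coreLoop_mem_core N t)
  have hbase : ex.param (3 / 2) ∈ connectedComponentIn (L \ U) x :=
    (ex.coreLoop 0).source ▸ hloop 0 0
  obtain ⟨β₁, hβ₁⟩ := ex.isPathConnected.joinedIn a ha _ hbase
  obtain ⟨β₂, hβ₂⟩ := ex.isPathConnected.joinedIn _ hbase b hb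
  obtain ⟨v, hv⟩ := e.exists_logVariation hτ
  obtain ⟨w₁, hw₁⟩ := e.exists_logVariation fun t ↦ hx (hβ₁ t)
  obtain ⟨w₂, hw₂⟩ := e.exists_logVariation fun t ↦ hx (hβ₂ t)
  obtain ⟨n, hn⟩ := hv.exists_sub_eq_int_mul (hw₁.trans hw₂)
  obtain ⟨w, hw⟩ := e.exists_logVariation fun t ↦ hx (hloop (-k * n) t)
  obtain ⟨w', hw'⟩ := e.exists_logVariation fun t ↦ hx (hloop 1 t)
  have hk0 : (k : ℂ) ≠ 0 := fun h ↦ by simpa [h] using hk 1 w' hw'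
  have hwn : w = n * (2 * Real.pi * Complex.I) := by
    refine mul_left_cancel₀ hk0 ?_
    have h := hk _ w hw
    push_cast at h
    linear_combination h
  have hβ := forall_trans_mem (forall_trans_mem hβ₁ (hloop (-k * n))) hβ₂
  have hβv : LogVariation e.coord ((β₁.trans (ex.coreLoop (-k * n))).trans β₂) v := by
    convert (hw₁.trans hw).trans hw₂ using 1
    linear_combination hn - hwn
  exact ⟨_, hβ, e.homotopic_of_logVariation_eq hτ (fun t ↦ hx (hβ t)) hv hβv⟩

end AnnulusChart

section Compression

variable {M : Type*} [TopologicalSpace M] {L L' U : Set M}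

/-- Every connected component of `S` is an annulus. -/
def HasAnnularComponents (S : Set M) : Prop :=
  ∀ x ∈ S, Nonempty (AnnulusChart (connectedComponentIn S x))

/-- `γ` can be deformed, relative to its endpoints, to a path in `S`. -/
def HomotopicInto {a b : M} (γ : Path a b) (S : Set M) : Prop :=
  ∃ β : Path a b, (∀ t, β t ∈ S) ∧ γ.Homotopic β

/-- `γ` can be deformed, relative to its endpoints, to a path in `S` followed by one in `T`. -/
def HomotopicIntoThen {a b : M} (γ : Path a b) (S T : Set M) : Prop :=
  ∃ (c : M) (β : Path a c) (τ : Path c b), (∀ t, β t ∈ S) ∧ (∀ t, τ t ∈ T) ∧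
    γ.Homotopic (β.trans τ)

variable {S T : Set M} {a b c : M} {γ : Path a b}

theorem homotopicInto_cast {a' b' : M} (ha : a' = a) (hb : b' = b) :
    HomotopicInto (γ.cast ha hb) S ↔ HomotopicInto γ S := by
  subst ha hb
  rfl

theorem HomotopicInto.trans {δ : Path b c} (h : HomotopicInto γ S) (hδ : ∀ t, δ t ∈ S) :
    HomotopicInto (γ.trans δ) S := by
  obtain ⟨β, hβ, hγβ⟩ := h
  exact ⟨β.trans δ, forall_trans_mem hβ hδ, hγβ.hcomp (.refl δ)⟩

theorem HomotopicInto.congr {δ : Path a b} (h : HomotopicInto γ S) (hδ : δ.Homotopic γ) :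
    HomotopicInto δ S :=
  let ⟨β, hβ, hγβ⟩ := h
  ⟨β, hβ, hδ.trans hγβ⟩

theorem HomotopicInto.homotopicIntoThen (h : HomotopicInto γ S) (hb : b ∈ T) :
    HomotopicIntoThen γ S T := by
  obtain ⟨β, hβ, hγβ⟩ := h
  exact ⟨b, β, .refl b, hβ, fun _ ↦ hb, hγβ.trans ⟨(Path.Homotopy.transRefl β).symm⟩⟩

namespace HomotopicIntoThen

theorem trans {δ : Path b c} (h : HomotopicIntoThen γ S T) (hδ : ∀ t, δ t ∈ T) :
    HomotopicIntoThen (γ.trans δ) S T := by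
  obtain ⟨d, β, τ, hβ, hτ, hγ⟩ := h
  exact ⟨d, β, τ.trans δ, hβ, forall_trans_mem hτ hδ,
    (hγ.hcomp (.refl δ)).trans ⟨Path.Homotopy.transAssoc β τ δ⟩⟩

theorem congr {δ : Path a b} (h : HomotopicIntoThen γ S T) (hδ : δ.Homotopic γ) :
    HomotopicIntoThen δ S T :=
  let ⟨c, β, τ, hβ, hτ, hγ⟩ := h
  ⟨c, β, τ, hβ, hτ, hδ.trans hγ⟩

theorem homotopicInto (h : HomotopicIntoThen γ S T)
    (hpush : ∀ ⦃c d : M⦄ (τ : Path c d), c ∈ S → d ∈ S → (∀ t, τ t ∈ T) → HomotopicInto τ S)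
    (hb : b ∈ S) : HomotopicInto γ S := by
  obtain ⟨c, β, τ, hβ, hτ, hγ⟩ := h
  obtain ⟨τ', hτ', hττ'⟩ := hpush τ (β.target ▸ hβ 1) hb hτ
  exact ⟨β.trans τ', forall_trans_mem hβ hτ', hγ.trans ((Path.Homotopic.refl β).hcomp hττ')⟩

end HomotopicIntoThen

theorem homotopicInto_of_forall_mem_interior_union (γ : Path a b)
    (hpush : ∀ ⦃c d : M⦄ (τ : Path c d), c ∈ S → d ∈ S → (∀ t, τ t ∈ T) → HomotopicInto τ S)
    (hγ : ∀ t, γ t ∈ interior S ∪ interior T) (ha : a ∈ S) (hb : b ∈ S) : HomotopicInto γ S := by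
  have key : HomotopicInto (γ.subpath 0 1) S ∨ HomotopicIntoThen (γ.subpath 0 1) S T := by
    refine Icc_induction zero_le_one (P := fun t ↦ HomotopicInto (γ.subpath 0 t) S ∨
      HomotopicIntoThen (γ.subpath 0 t) S T) (Or.inl ?_) fun t ↦ ?_
    · exact ⟨.refl _, fun _ ↦ γ.source.symm ▸ ha, (Path.subpath_self γ 0).symm ▸ .refl _⟩
    have hsplit (y z : I) : (γ.subpath 0 z).Homotopic ((γ.subpath 0 y).trans (γ.subpath y z)) :=
      ⟨(Path.Homotopy.subpathTransSubpath γ 0 y z).symm⟩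
    rcases hγ t with ht | ht
    · refine ⟨γ ⁻¹' interior S, (isOpen_interior.preimage γ.continuous).mem_nhds ht, ?_⟩
      intro y z hyz hN hy
      replace hN : Icc y z ⊆ γ ⁻¹' S := hN.trans (preimage_mono interior_subset)
      have hyS := hy.elim id fun h ↦ h.homotopicInto hpush (hN ⟨le_rfl, hyz⟩)
      exact Or.inl ((hyS.trans (forall_subpath_mem hyz hN)).congr (hsplit y z))
    · refine ⟨γ ⁻¹' interior T, (isOpen_interior.preimage γ.continuous).mem_nhds ht, ?_⟩
      intro y z hyz hN hy
      replace hN : Icc y z ⊆ γ ⁻¹' T := hN.trans (preimage_mono interior_subset)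
      have hyT := hy.elim (fun h ↦ h.homotopicIntoThen (hN ⟨le_rfl, hyz⟩)) id
      exact Or.inr ((hyT.trans (forall_subpath_mem hyz hN)).congr (hsplit y z))
  have h := key.elim id fun h ↦ h.homotopicInto hpush (γ.target.symm ▸ hb)
  rwa [Path.subpath_zero_one, homotopicInto_cast] at h

theorem HasAnnularComponents.homotopicInto_of_endpoints_mem [T2Space M] (hM : IsSurface M)
    (hL : HasNoCompactComponents (interior L)ᶜ) (hLL' : L ⊆ L')
    (hLU : HasAnnularComponents (L \ U)) (hL'U : HasAnnularComponents (L' \ U))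
    (ha : a ∈ L \ U) (hb : b ∈ L \ U) (τ : Path a b) (hτ : ∀ t, τ t ∈ L' \ U) :
    HomotopicInto τ L := by
  have hsub : L \ U ⊆ L' \ U := sdiff_subset_sdiff_left hLL'
  obtain ⟨e⟩ := hL'U a (hsub ha)
  obtain ⟨ea⟩ := hLU a ha
  obtain ⟨eb⟩ := hLU b hb
  have hτA : range τ ⊆ connectedComponentIn (L' \ U) a :=
    (isPreconnected_range τ.continuous).subset_connectedComponentIn ⟨0, τ.source⟩
      (range_subset_iff.2 hτ)
  have hb' : b ∈ connectedComponentIn (L' \ U) a := hτA ⟨1, τ.target⟩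
  have hsuba := connectedComponentIn_mono a hsub
  have hsubb := connectedComponentIn_eq hb' ▸ connectedComponentIn_mono b hsub
  have hAU : connectedComponentIn (L' \ U) a ⊆ Uᶜ :=
    (connectedComponentIn_subset _ _).trans (sdiff_subset_compl _ _)
  have heq := AnnulusChart.connectedComponentIn_eq_of_subset hM hL e hAU ea hsuba eb hsubb
  obtain ⟨β, hβ, hτβ⟩ := AnnulusChart.exists_homotopic_of_subset hM hL e hAU ea hsuba
    (mem_connectedComponentIn ha) (heq ▸ mem_connectedComponentIn hb) τ (range_subset_iff.1 hτA)
  exact ⟨β, fun t ↦ (connectedComponentIn_subset _ _ (hβ t)).1, hτβ⟩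

theorem HasAnnularComponents.homotopicInto [T2Space M] (hM : IsSurface M)
    (hL : HasNoCompactComponents (interior L)ᶜ) (hLL' : L ⊆ L') (hUL : closure U ⊆ interior L)
    (hLU : HasAnnularComponents (L \ U)) (hL'U : HasAnnularComponents (L' \ U))
    (hγ : ∀ t, γ t ∈ interior L') (ha : a ∈ L) (hb : b ∈ L) : HomotopicInto γ L := by
  refine homotopicInto_of_forall_mem_interior_union (T := L' \ U) γ (fun c d τ hc hd hτ ↦ ?_)
    (fun t ↦ ?_) ha hb
  · exact hLU.homotopicInto_of_endpoints_mem hM hL hLL' hL'U ⟨hc, (τ.source ▸ hτ 0).2⟩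
      ⟨hd, (τ.target ▸ hτ 1).2⟩ τ hτ
  · rw [sdiff_eq, interior_inter, interior_compl]
    exact or_iff_not_imp_left.2 fun ht ↦ ⟨hγ t, fun h ↦ ht (hUL h)⟩

end Compression

/-! ### Loops in a compact set generate a finitely generated subgroup -/

section FiniteGeneration

variable {X : Type*} [TopologicalSpace X] {S S' : Set X} {x a a' b b' c : X}

/-- Any two paths in `S` with the same endpoints are homotopic in the ambient space. For
path-connected `S` this says that `π₁(S) → π₁(X)` is trivial. -/
def IsHomotopicallyTrivial (S : Set X) : Prop :=
  ∀ ⦃a b : X⦄ (p q : Path a b), (∀ t, p t ∈ S) → (∀ t, q t ∈ S) → p.Homotopic q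

theorem IsHomotopicallyTrivial.mono (hS' : IsHomotopicallyTrivial S') (hSS' : S ⊆ S') :
    IsHomotopicallyTrivial S :=
  fun _ _ p q hp hq ↦ hS' p q (fun t ↦ hSS' (hp t)) fun t ↦ hSS' (hq t)

theorem isHomotopicallyTrivial_of_simplyConnectedSpace [SimplyConnectedSpace S] :
    IsHomotopicallyTrivial S := by
  intro a b p q hp hq
  have ha : a ∈ S := p.source ▸ hp 0
  have hb : b ∈ S := p.target ▸ hp 1
  let lift (r : Path a b) (hr : ∀ t, r t ∈ S) : Path (⟨a, ha⟩ : S) ⟨b, hb⟩ :=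
    { toFun t := ⟨r t, hr t⟩
      source' := Subtype.ext r.source
      target' := Subtype.ext r.target }
  exact (SimplyConnectedSpace.paths_homotopic (lift p hp) (lift q hq)).map
    ⟨Subtype.val, continuous_subtype_val⟩

theorem isHomotopicallyTrivial_range {E : Type*} [TopologicalSpace E] [ContractibleSpace E]
    {j : E → X} (hj : IsEmbedding j) : IsHomotopicallyTrivial (range j) :=
  have := hj.toHomeomorph.symm.contractibleSpace
  isHomotopicallyTrivial_of_simplyConnectedSpace

/-- A finite family of path-connected open sets `V k`, `k ∈ T`, covering `L`, indexed by points
`k ∈ V k`, such that the union of two members that meet is homotopically trivial. -/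
structure IsGoodCover (T : Finset X) (V : X → Set X) (L : Set X) : Prop where
  isOpen : ∀ k ∈ T, IsOpen (V k)
  isPathConnected : ∀ k ∈ T, IsPathConnected (V k)
  mem_self : ∀ k ∈ T, k ∈ V k
  exists_mem : ∀ y ∈ L, ∃ k ∈ T, y ∈ V k
  isHomotopicallyTrivial_union : ∀ k ∈ T, ∀ l ∈ T, (V k ∩ V l).Nonempty →
    IsHomotopicallyTrivial (V k ∪ V l)

theorem exists_isGoodCover [TopologicalSpace.PseudoMetrizableSpace X] [LocallyPathConnectedSpace X]
    (hX : ∀ y : X, ∃ U ∈ 𝓝 y, IsHomotopicallyTrivial U) {L : Set X} (hL : IsCompact L) :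
    ∃ T V, IsGoodCover T V L := by
  let := TopologicalSpace.pseudoMetrizableSpacePseudoMetric X
  obtain ⟨δ, hδ, hball⟩ := lebesgue_number_lemma_of_metric_sUnion hL
    (c := {U | IsOpen U ∧ IsHomotopicallyTrivial U}) (fun U hU ↦ hU.1) fun y _ ↦ by
      obtain ⟨U, hU, hU'⟩ := hX y
      exact ⟨interior U, ⟨isOpen_interior, hU'.mono interior_subset⟩,
        mem_interior_iff_mem_nhds.2 hU⟩
  let V (y : X) : Set X := pathComponentIn (ball y (δ / 4)) y
  have hV_open (y : X) : IsOpen (V y) := isOpen_ball.pathComponentIn _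
  have hV_mem (y : X) : y ∈ V y := mem_pathComponentIn_self (mem_ball_self (by positivity))
  have hV_ball (y : X) : V y ⊆ ball y (δ / 4) := pathComponentIn_subset
  obtain ⟨T, hTL, hT⟩ := hL.elim_nhds_subcover V fun y _ ↦ (hV_open y).mem_nhds (hV_mem y)
  refine ⟨T, V, fun y _ ↦ hV_open y,
    fun y _ ↦ isPathConnected_pathComponentIn (mem_ball_self (by positivity)),
    fun y _ ↦ hV_mem y, fun y hy ↦ by simpa using hT hy, fun k hk l _ ⟨z, hzk, hzl⟩ ↦ ?_⟩
  obtain ⟨U, hU, hkU⟩ := hball k (hTL k hk)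
  have hkl : dist l k < δ / 2 := by
    have hzk' := mem_ball.1 (hV_ball k hzk)
    have hzl' := mem_ball'.1 (hV_ball l hzl)
    linarith [dist_triangle l z k]
  refine hU.2.mono (Subset.trans (union_subset ?_ ?_) hkU)
  · exact (hV_ball k).trans (ball_subset_ball (by linarith))
  · exact (hV_ball l).trans (ball_subset_ball' (by linarith))

/-- The class of the loop `γ`, as an element of the fundamental group. Mathlib's multiplication is
that of `End`: the class of `γ.trans γ'` is `loopClass γ' * loopClass γ`. -/
def loopClass (γ : Path x x) : FundamentalGroup X x :=
  Path.Homotopic.Quotient.mk γ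

/-- The class of the loop at `x` running along `p a`, then `q`, then back along `p b`. -/
noncomputable def basedLoop (p : ∀ y, Path x y) (q : Path a b) : FundamentalGroup X x :=
  loopClass ((p a).trans (q.trans (p b).symm))

variable {p : ∀ y, Path x y} {T : Finset X} {V : X → Set X} {L : Set X}

theorem loopClass_eq_iff {γ γ' : Path x x} : loopClass γ = loopClass γ' ↔ γ.Homotopic γ' :=
  Path.Homotopic.Quotient.eq

theorem loopClass_surjective : Function.Surjective (loopClass (x := x)) :=
  Path.Homotopic.Quotient.mk_surjective

theorem basedLoop_eq_conj (γ : Path x x) :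
    basedLoop p γ = (loopClass (p x))⁻¹ * loopClass γ * loopClass (p x) :=
  rfl

theorem basedLoop_eq_of_homotopic {q q' : Path a b} (h : q.Homotopic q') :
    basedLoop p q = basedLoop p q' :=
  loopClass_eq_iff.2 ((Path.Homotopic.refl _).hcomp (h.hcomp (Path.Homotopic.refl _)))

open Path.Homotopic.Quotient in
theorem basedLoop_trans (q : Path a b) (q' : Path b c) :
    basedLoop p (q.trans q') = basedLoop p q' * basedLoop p q := by
  have cancel (v : Path.Homotopic.Quotient b x) :
      (mk (p b)).symm.trans ((mk (p b)).trans v) = v := by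
    rw [← trans_assoc, symm_trans, refl_trans]
  simp only [basedLoop, loopClass, FundamentalGroup.mul_def, mk_trans, mk_symm, trans_assoc, cancel]

theorem basedLoop_symm (q : Path a b) : basedLoop p q.symm = (basedLoop p q)⁻¹ := by
  have h : (basedLoop p q)⁻¹ = loopClass ((p a).trans (q.trans (p b).symm)).symm := rfl
  rw [h, Path.trans_symm, Path.trans_symm, Path.symm_symm]
  exact loopClass_eq_iff.2 (Path.Homotopic.trans_assoc _ _ _).symm

theorem basedLoop_cast (ha : a' = a) (hb : b' = b) (q : Path a b) :
    basedLoop p (q.cast ha hb) = basedLoop p q := by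
  subst ha hb
  rfl

/-- The classes of the loops that run along the base paths `p` and, in between, along a path from
`k` to `l` in `V k ∪ V l`, for overlapping members `V k`, `V l` of the cover. -/
def edgeLoops (p : ∀ y, Path x y) (T : Finset X) (V : X → Set X) : Set (FundamentalGroup X x) :=
  {g | ∃ k ∈ T, ∃ l ∈ T, (V k ∩ V l).Nonempty ∧
    ∃ q : Path k l, (∀ t, q t ∈ V k ∪ V l) ∧ basedLoop p q = g}

/-- `q` is, up to homotopy, a chain of edges of the cover: closing up `q` at both ends inside
members of the cover yields a product of edge loops. -/
def IsEdgeChain (p : ∀ y, Path x y) (T : Finset X) (V : X → Set X) (q : Path a b) : Prop :=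
  ∀ k ∈ T, ∀ l ∈ T, ∀ u : Path k a, ∀ w : Path b l, (∀ t, u t ∈ V k) → (∀ t, w t ∈ V l) →
    basedLoop p w * basedLoop p q * basedLoop p u ∈ Subgroup.closure (edgeLoops p T V)

namespace IsGoodCover

theorem finite_edgeLoops (hV : IsGoodCover T V L) : (edgeLoops p T V).Finite := by
  have hfin := (T ×ˢ T).finite_toSet.biUnion (t := fun e ↦ {g | (V e.1 ∩ V e.2).Nonempty ∧
    ∃ q : Path e.1 e.2, (∀ t, q t ∈ V e.1 ∪ V e.2) ∧ basedLoop p q = g}) fun e he ↦ by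
      obtain ⟨hk, hl⟩ := Finset.mem_product.1 he
      refine Set.Subsingleton.finite ?_
      rintro _ ⟨hne, q, hq, rfl⟩ _ ⟨-, q', hq', rfl⟩
      exact basedLoop_eq_of_homotopic
        (hV.isHomotopicallyTrivial_union _ hk _ hl hne q q' hq hq')
  refine hfin.subset ?_
  rintro g ⟨k, hk, l, hl, hg⟩
  exact mem_biUnion (x := (k, l)) (Finset.mem_product.2 ⟨hk, hl⟩) hg

theorem exists_path (hV : IsGoodCover T V L) {k : X} (hk : k ∈ T) (ha : a ∈ V k) :
    ∃ r : Path a k, ∀ t, r t ∈ V k :=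
  let h := (hV.isPathConnected k hk).joinedIn a ha k (hV.mem_self k hk)
  ⟨h.somePath, h.somePath_mem⟩

theorem isEdgeChain_of_forall_mem (hV : IsGoodCover T V L) {m : X} (hm : m ∈ T) {q : Path a b}
    (hq : ∀ t, q t ∈ V m) : IsEdgeChain p T V q := by
  intro k hk l hl u w hu hw
  have ha : a ∈ V m := q.source ▸ hq 0
  have hb : b ∈ V m := q.target ▸ hq 1
  obtain ⟨r, hr⟩ := hV.exists_path hm ha
  have hin : basedLoop p (u.trans r) ∈ edgeLoops p T V :=
    ⟨k, hk, m, hm, ⟨a, u.target ▸ hu 1, ha⟩, _,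
      forall_trans_mem (fun t ↦ Or.inl (hu t)) fun t ↦ Or.inr (hr t), rfl⟩
  have hout : basedLoop p (r.symm.trans (q.trans w)) ∈ edgeLoops p T V :=
    ⟨m, hm, l, hl, ⟨b, hb, w.source ▸ hw 0⟩, _,
      forall_trans_mem (fun t ↦ Or.inl (hr _))
        (forall_trans_mem (fun t ↦ Or.inl (hq t)) fun t ↦ Or.inr (hw t)), rfl⟩
  have h := mul_mem (Subgroup.subset_closure hout) (Subgroup.subset_closure hin)
  simp only [basedLoop_trans, basedLoop_symm] at h
  simpa only [mul_assoc, inv_mul_cancel_left] using h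

theorem isEdgeChain_trans (hV : IsGoodCover T V L) (hb : b ∈ L) {q : Path a b} {q' : Path b c}
    (hq : IsEdgeChain p T V q) (hq' : IsEdgeChain p T V q') : IsEdgeChain p T V (q.trans q') := by
  intro k hk l hl u w hu hw
  obtain ⟨m, hm, hbm⟩ := hV.exists_mem b hb
  obtain ⟨r, hr⟩ := hV.exists_path hm hbm
  have h := mul_mem (hq' m hm l hl r.symm w (fun t ↦ hr _) hw) (hq k hk m hm u r hu hr)
  simpa only [basedLoop_trans, basedLoop_symm, mul_assoc, inv_mul_cancel_left] using h

theorem isEdgeChain (hV : IsGoodCover T V L) {q : Path a b} (hq : ∀ t, q t ∈ L) :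
    IsEdgeChain p T V q := by
  suffices h : IsEdgeChain p T V (q.subpath 0 1) by
    intro k hk l hl u w hu hw
    have := h k hk l hl (u.cast rfl q.source) (w.cast q.target rfl) hu hw
    simpa only [Path.subpath_zero_one, basedLoop_cast] using this
  refine Icc_induction zero_le_one (P := fun t ↦ IsEdgeChain p T V (q.subpath 0 t)) ?_ fun t ↦ ?_
  · obtain ⟨m, hm, h0⟩ := hV.exists_mem _ (hq 0)
    refine hV.isEdgeChain_of_forall_mem hm (forall_subpath_mem le_rfl ?_)
    intro s hs
    obtain rfl : s = 0 := by simpa using hs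
    exact h0
  · obtain ⟨m, hm, ht⟩ := hV.exists_mem _ (hq t)
    refine ⟨q ⁻¹' V m, ((hV.isOpen m hm).preimage q.continuous).mem_nhds ht,
      fun y z hyz hsub h ↦ ?_⟩
    have hstep := hV.isEdgeChain_trans (hq y) h
      (hV.isEdgeChain_of_forall_mem (p := p) hm (forall_subpath_mem hyz hsub))
    intro k hk l hl u w hu hw
    rw [← basedLoop_eq_of_homotopic ⟨Path.Homotopy.subpathTransSubpath q 0 y z⟩]
    exact hstep k hk l hl u w hu hw

theorem exists_finite_loopClass_mem_closure [PathConnectedSpace X]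
    (hV : IsGoodCover T V L) (hx : x ∈ L) :
    ∃ S : Set (FundamentalGroup X x), S.Finite ∧
      ∀ γ : Path x x, (∀ t, γ t ∈ L) → loopClass γ ∈ Subgroup.closure S := by
  let p (y : X) : Path x y := PathConnectedSpace.somePath x y
  obtain ⟨k, hk, hxk⟩ := hV.exists_mem x hx
  obtain ⟨r, hr⟩ := hV.exists_path hk hxk
  let c : FundamentalGroup X x := loopClass (p x) * (basedLoop p r)⁻¹
  refine ⟨insert c (edgeLoops p T V), hV.finite_edgeLoops.insert c, fun γ hγ ↦ ?_⟩
  have hc : c ∈ Subgroup.closure (insert c (edgeLoops p T V)) :=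
    Subgroup.subset_closure (mem_insert _ _)
  have hγ' := Subgroup.closure_mono (subset_insert c (edgeLoops p T V))
    (hV.isEdgeChain hγ k hk k hk r.symm r (fun t ↦ hr _) hr)
  have hconj : loopClass γ = c * (basedLoop p r * basedLoop p γ * basedLoop p r.symm) * c⁻¹ := by
    simp only [c, basedLoop_symm, basedLoop_eq_conj γ]
    group
  exact hconj ▸ mul_mem (mul_mem hc hγ') (inv_mem hc)

end IsGoodCover

end FiniteGeneration

/-! ### Compact exhaustions of surfaces -/

section Surface

variable {M : Type*} [TopologicalSpace M] {x : M} {L : Set M}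

theorem IsSurface.nonempty_chartedSpace (hM : IsSurface M) : Nonempty (ChartedSpace ℂ M) := by
  choose j hj hx using hM
  exact ⟨{
    atlas := range fun x ↦ ((hj x).toOpenPartialHomeomorph (j x)).symm
    chartAt x := ((hj x).toOpenPartialHomeomorph (j x)).symm
    mem_chart_source x := by simpa using hx x
    chart_mem_atlas x := mem_range_self x }⟩

theorem IsSurface.exists_isHomotopicallyTrivial_nhds (hM : IsSurface M) (x : M) :
    ∃ U ∈ 𝓝 x, IsHomotopicallyTrivial U := by
  obtain ⟨j, hj, hx⟩ := hM x
  exact ⟨range j, hj.isOpen_range.mem_nhds hx, isHomotopicallyTrivial_range hj.isEmbedding⟩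

variable [T2Space M] [SecondCountableTopology M] [ConnectedSpace M]

theorem IsSurface.fg_fundamentalGroup (hM : IsSurface M) (hL : IsCompact L) (hx : x ∈ L)
    (h : ∀ γ : Path x x, HomotopicInto γ L) : Group.FG (FundamentalGroup M x) := by
  obtain ⟨_⟩ := hM.nonempty_chartedSpace
  have := ChartedSpace.locallyCompactSpace ℂ M
  have := ChartedSpace.locallyPathConnectedSpace ℂ M
  have : PathConnectedSpace M := pathConnectedSpace_iff_connectedSpace.2 inferInstance
  obtain ⟨T, V, hV⟩ := exists_isGoodCover hM.exists_isHomotopicallyTrivial_nhds hL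
  obtain ⟨S, hS, hgen⟩ := hV.exists_finite_loopClass_mem_closure hx
  refine Group.fg_iff.2 ⟨S, (Subgroup.eq_top_iff' _).2 fun g ↦ ?_, hS⟩
  obtain ⟨γ, rfl⟩ := loopClass_surjective g
  obtain ⟨β, hβ, hγβ⟩ := h γ
  exact loopClass_eq_iff.2 hγβ ▸ hgen β hβ

theorem eventually_nonannular_component_general (hM : IsSurface M)
    (hinf : ¬ Group.FG (FundamentalGroup M x)) (W : CompactExhaustion M)
    (hW : ∀ n, HasNoCompactComponents (interior (W n))ᶜ) (n : ℕ) :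
    ∃ m > n, ∃ y ∈ W m \ interior (W n),
      ¬ Nonempty (connectedComponentIn (W m \ interior (W n)) y ≃ₜ annulusModel) := by
  by_contra! hann
  have hannular (m : ℕ) (hm : n < m) : HasAnnularComponents (W m \ interior (W n)) :=
    fun y hy ↦ nonempty_annulusChart (hann m hm y hy)
  obtain ⟨N, hN, hxN⟩ : ∃ N > n, x ∈ W N :=
    ⟨max (n + 1) (W.find x), by omega, W.subset (le_max_right _ _) (W.mem_find x)⟩
  refine hinf (hM.fg_fundamentalGroup (W.isCompact N) hxN fun γ ↦ ?_)
  obtain ⟨m, hm⟩ := W.exists_superset_of_isCompact (isCompact_range γ.continuous)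
  have hclosure : closure (interior (W n)) ⊆ interior (W N) :=
    (closure_minimal interior_subset (W.isCompact n).isClosed).trans (W.subset_interior hN)
  exact HasAnnularComponents.homotopicInto hM (hW N) (W.subset (le_max_left N (m + 1))) hclosure
    (hannular N hN) (hannular _ (by omega))
    (fun t ↦ W.subset_interior (by omega : m < max N (m + 1)) (hm (mem_range_self t))) hxN hxN

end Surface

/-- Let `M` be an open surface with infinitely generated fundamental group and let
`{W n}` be a compact exhaustion of `M` such that each `W n` is connected, each
boundary curve of `W n` separates `M`, and `M − int (W n)` has no compact
components. Then for each `n` there exists `m > n` such that `W m − int (W n)` has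
a connected component that is not an annulus. -/
theorem eventually_nonannular_component
    (M : Type*) [TopologicalSpace M] [T2Space M] [SecondCountableTopology M]
    [ConnectedSpace M] (hnc : ¬ CompactSpace M)
    (hsurf : ∀ x : M, ∃ U : Set M, IsOpen U ∧ x ∈ U ∧ Nonempty (U ≃ₜ (ℝ × ℝ)))
    (hinf : ∀ x : M, ¬ Group.FG (FundamentalGroup M x))
    (W : ℕ → Set M)
    (hWc : ∀ n, IsCompact (W n)) (hWconn : ∀ n, IsConnected (W n))
    (hWmono : ∀ n, W n ⊆ interior (W (n + 1)))
    (hWcov : (⋃ n, W n) = Set.univ)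
    (hsep : ∀ n, ∀ x ∈ frontier (W n),
      ¬ IsPreconnected (Set.univ \ connectedComponentIn (frontier (W n)) x))
    (hnocpt : ∀ n, ∀ x ∈ (interior (W n))ᶜ,
      ¬ IsCompact (connectedComponentIn (interior (W n))ᶜ x)) :
    ∀ n, ∃ m > n, ∃ x ∈ W m \ interior (W n),
      ¬ Nonempty ((connectedComponentIn (W m \ interior (W n)) x : Set M) ≃ₜ
        annulusModel) :=
  eventually_nonannular_component_general (isSurface_of_forall_homeomorph hsurf)
    (hinf (Classical.arbitrary M)) ⟨W, hWc, hWmono, hWcov⟩ hnocpt
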